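/- Let u ∈ E be differentially transcendental over F, and let P₁, Q₁, P₂, Q₂ ∈ F{u} be of total degree at most 1 with each pair Pᵢ, Qᵢ coprime and mᵢ := max(ord Pᵢ, ord Qᵢ) ≥ 0. Then F⟨{P₁(u)/Q₁(u), P₂(u)/Q₂(u)}⟩ = F⟨{u}⟩ (i.e. the linear differential rational parametrization is proper) if and only if R := δ-Res(f₁,f₂) ∈ F{x,y} satisfies R ≠ 0, ord_x(R) = m₂ and ord_y(R) = m₁. -/

import Mathlib

/-!
Write `η = (P₁(u) / Q₁(u), P₂(u) / Q₂(u))`; in the lemmas below the indices `1, 2` of the two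
pairs are `0, 1 : Fin 2`. The rows of the resultant matrix have coefficients which are at most
linear in the highest `x`-derivative `x_{m₂}` and in the highest `y`-derivative `y_{m₁}`, and each
of these two variables occurs in one row only. So the resultant `R` is affine in `x_{m₂}`, and the
coefficient of `x_{m₂}` is the determinant of the matrix `resMatQ 0` in which the row of `d^{m₂}
f₁` is replaced by the coefficients of `Q₁`; in the same way `resMatQ 1` gives the coefficient of
`y_{m₁}`. The condition on `R` therefore says exactly that both of these minors are nonzero
(`resultant_condition_iff`).

**The minors are nonzero ⇒ the parametrization is proper.** The first point is that the minor
`resMatQ 0` does not vanish at `η` (`theta_eta_resMatQ_ne_zero`). For this, the field `F(x, y)` is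
given a derivation for which the generic point solves the affine equation `R = 0` in `x_{m₂}`. A
kernel vector `z` of the resultant matrix at this point satisfies a first order recursion `z_{l+1}
= (Δ + μ) z_l`, so after rescaling it is the sequence of derivatives of a single element solving
both equations (`exists_solution`); that its last coordinate, by which it is divided, and the
denominators `Q₁`, `Q₂` do not vanish follows by counting transcendence degrees
(`no_small_solution`, `no_homogeneous_solution`, `aff_ne_zero_of_solution`). As `u` is
differentially transcendental, `η` specializes to this generic point (`specializesTo_point`),
where the minor is nonzero; hence the minor is nonzero at `η` too. Cramer's rule then expresses
`u` as a rational function of the derivatives of `η` (`mem_pointField`).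

**The parametrization is proper ⇒ the minors are nonzero.** Suppose that a minor vanishes at `η`.
A kernel vector, corrected by a multiple of the solution `(u^(l))`, is a nonzero solution of the
linearized homogeneous equations up to the orders of the matrix (`exists_tangent`). It can be
prolonged to solve all of their derivatives (`exists_functional`). The result is a nonzero tangent
vector `s` at `u` along which the map `u ↦ η` has derivative zero: the first order deformation
`u^(l) ↦ u^(l) + ε s_l` fixes all derivatives of `η`, hence the whole field `F⟨η⟩`. If `F⟨η⟩ =
F⟨u⟩`, it fixes every `u^(l)` and `s = 0` (`tangent_eq_zero`), a contradiction.
-/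

open MvPolynomial

noncomputable section

namespace DiffCurve

variable (F : Type*) {E : Type*} [Field F] [Field E] [Algebra F E]

/-- `F⟨S⟩`: the intermediate field of `E/F` generated by all iterated derivatives of
elements of `S`. -/
def genDF (D : Derivation ℤ E E) (S : Set E) : IntermediateField F E :=
  IntermediateField.adjoin F {x | ∃ s ∈ S, ∃ k : ℕ, (⇑D)^[k] s = x}

/-- `u` is differentially transcendental over `F`. -/
def DiffTrans (D : Derivation ℤ E E) (u : E) : Prop :=
  AlgebraicIndependent F (fun k : ℕ => (⇑D)^[k] u)

/-- Evaluation of `P ∈ F{u}` at `v`: the `F`-algebra map sending `u_k ↦ D^k v`. -/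
def evalD (D : Derivation ℤ E E) (v : E) : MvPolynomial ℕ F →ₐ[F] E :=
  aeval fun k => (⇑D)^[k] v

/-- Evaluation of `A ∈ F{x,y}` at `(η₁, η₂)`: `x_k ↦ D^k η₁`, `y_k ↦ D^k η₂`. -/
def evalD2 (D : Derivation ℤ E E) (η₁ η₂ : E) : MvPolynomial (Fin 2 × ℕ) F →ₐ[F] E :=
  aeval fun p => (⇑D)^[p.2] (if p.1 = 0 then η₁ else η₂)

variable {F}

/-- The order of `P ∈ F{u}`: the largest `k` such that `u_k` occurs (`⊥` if none). -/
def ordU (P : MvPolynomial ℕ F) : WithBot ℕ := P.vars.max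

/-- `ord_x` (for `i = 0`) resp. `ord_y` (for `i = 1`) of `A ∈ F{x,y}`. -/
def ordIdx (i : Fin 2) (A : MvPolynomial (Fin 2 × ℕ) F) : WithBot ℕ :=
  ((A.vars.filter fun v => v.1 = i).image Prod.snd).max

/-- `ord(A) = max(ord_x A, ord_y A)`. -/
def ordXY (A : MvPolynomial (Fin 2 × ℕ) F) : WithBot ℕ :=
  max (ordIdx 0 A) (ordIdx 1 A)

/-- The separant of `A` w.r.t. `x`: `∂A/∂x_s` where `s = ord_x A` (junk value `1` if
`ord_x A = ⊥`). -/
def sepX (A : MvPolynomial (Fin 2 × ℕ) F) : MvPolynomial (Fin 2 × ℕ) F :=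
  WithBot.recBotCoe 1 (fun s => pderiv ((0 : Fin 2), s) A) (ordIdx 0 A)

/-- The differential ideal `[A]` generated by `A`, for a derivation `d`. -/
def diffIdeal {R : Type*} [CommRing R] (d : Derivation ℤ R R) (A : R) : Ideal R :=
  Ideal.span (Set.range fun k : ℕ => (⇑d)^[k] A)

/-- The general component `sat(A) = [A] : S_A^∞` (as a set). -/
def satSet (dxy : Derivation ℤ (MvPolynomial (Fin 2 × ℕ) F) (MvPolynomial (Fin 2 × ℕ) F))
    (A : MvPolynomial (Fin 2 × ℕ) F) : Set (MvPolynomial (Fin 2 × ℕ) F) :=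
  {f | ∃ m : ℕ, sepX A ^ m * f ∈ diffIdeal dxy A}

variable (F)

/-- `(u, P₁, Q₁, P₂, Q₂)` is a differential rational parametrization of the differential
curve `(C, A)`. -/
def IsParam (D : Derivation ℤ E E)
    (dxy : Derivation ℤ (MvPolynomial (Fin 2 × ℕ) F) (MvPolynomial (Fin 2 × ℕ) F))
    (A : MvPolynomial (Fin 2 × ℕ) F) (u : E) (P₁ Q₁ P₂ Q₂ : MvPolynomial ℕ F) : Prop :=
  DiffTrans F D u ∧
  P₁ ≠ 0 ∧ Q₁ ≠ 0 ∧ IsRelPrime P₁ Q₁ ∧ P₂ ≠ 0 ∧ Q₂ ≠ 0 ∧ IsRelPrime P₂ Q₂ ∧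
  ¬ (evalD F D u P₁ / evalD F D u Q₁ ∈ (algebraMap F E).range ∧
     evalD F D u P₂ / evalD F D u Q₂ ∈ (algebraMap F E).range) ∧
  {B : MvPolynomial (Fin 2 × ℕ) F |
      evalD2 F D (evalD F D u P₁ / evalD F D u Q₁) (evalD F D u P₂ / evalD F D u Q₂) B = 0}
    = satSet dxy A

/-- A proper differential rational parametrization: additionally
`F⟨η₁, η₂⟩ = F⟨u⟩`. -/
def IsProperParam (D : Derivation ℤ E E)
    (dxy : Derivation ℤ (MvPolynomial (Fin 2 × ℕ) F) (MvPolynomial (Fin 2 × ℕ) F))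
    (A : MvPolynomial (Fin 2 × ℕ) F) (u : E) (P₁ Q₁ P₂ Q₂ : MvPolynomial ℕ F) : Prop :=
  IsParam F D dxy A u P₁ Q₁ P₂ Q₂ ∧
  genDF F D {evalD F D u P₁ / evalD F D u Q₁, evalD F D u P₂ / evalD F D u Q₂}
    = genDF F D {u}

/-- The projection `F{x,y,u} → F{x,y}` sending `u_k ↦ 0` and keeping `x_k`, `y_k`. -/
def projXY : MvPolynomial (Fin 3 × ℕ) F →ₐ[F] MvPolynomial (Fin 2 × ℕ) F :=
  aeval fun p => if h : (p.1 : ℕ) < 2 then X ((⟨p.1, h⟩ : Fin 2), p.2) else 0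

/-- The `i`-th row polynomial of the differential resultant matrix:
`d^{m₂}f₁, …, f₁, d^{m₁}f₂, …, f₂` where `f₁ = x₀·Q₁ − P₁`, `f₂ = y₀·Q₂ − P₂`
in `F{x,y,u}`. -/
def resRow (dxyu : Derivation ℤ (MvPolynomial (Fin 3 × ℕ) F) (MvPolynomial (Fin 3 × ℕ) F))
    (P₁ Q₁ P₂ Q₂ : MvPolynomial ℕ F) (m₁ m₂ : ℕ) (i : ℕ) : MvPolynomial (Fin 3 × ℕ) F :=
  if i ≤ m₂ then
    (⇑dxyu)^[m₂ - i] (X ((0 : Fin 3), 0) * rename (fun k => ((2 : Fin 3), k)) Q₁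
      - rename (fun k => ((2 : Fin 3), k)) P₁)
  else
    (⇑dxyu)^[m₁ + m₂ + 1 - i] (X ((1 : Fin 3), 0) * rename (fun k => ((2 : Fin 3), k)) Q₂
      - rename (fun k => ((2 : Fin 3), k)) P₂)

/-- The differential resultant `δ-Res(f₁, f₂) ∈ F{x,y}`: the determinant of the
`(m₁+m₂+2) × (m₁+m₂+2)` matrix whose rows are the coefficient vectors of
`d^{m₂}f₁, …, f₁, d^{m₁}f₂, …, f₂` w.r.t. `u_{m₁+m₂}, …, u_1, u_0, 1`. -/
def deltaRes (dxyu : Derivation ℤ (MvPolynomial (Fin 3 × ℕ) F) (MvPolynomial (Fin 3 × ℕ) F))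
    (P₁ Q₁ P₂ Q₂ : MvPolynomial ℕ F) (m₁ m₂ : ℕ) : MvPolynomial (Fin 2 × ℕ) F :=
  Matrix.det (Matrix.of fun i j : Fin (m₁ + m₂ + 2) =>
    if (j : ℕ) ≤ m₁ + m₂ then
      projXY F (pderiv ((2 : Fin 3), m₁ + m₂ - (j : ℕ)) (resRow F dxyu P₁ Q₁ P₂ Q₂ m₁ m₂ i))
    else projXY F (resRow F dxyu P₁ Q₁ P₂ Q₂ m₁ m₂ i))

/-- A linear homogeneous differential polynomial `L = Σ_k a_k u_k` in `F{u}`. -/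
def IsLinHom {F : Type*} [Field F] (L : MvPolynomial ℕ F) : Prop :=
  ∀ m ∈ L.support, ∃ k : ℕ, m = Finsupp.single k 1

/-! ### Linearization in the `u`-variables -/

section Linearization

variable {F}
variable {H : Type*} [Field H] [Algebra F H]
variable {V : Type*} [AddCommGroup V] [Module H V] [Module Hᵐᵒᵖ V] [IsCentralScalar H V]

/-- Evaluation `F{x,y,u} → H` sending `x_k, y_k` to `ξ 0 k, ξ 1 k` and `u_k` to `ω k`. -/
def evB (ξ : Fin 2 → ℕ → H) (ω : ℕ → H) : MvPolynomial (Fin 3 × ℕ) F →+* H :=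
  eval₂Hom (algebraMap F H) fun p => if h : (p.1 : ℕ) < 2 then ξ ⟨p.1, h⟩ p.2 else ω p.2

/-- The first order deformation of `evB ξ ω` which moves `u_k` in the direction `z k`, where the
directions live in an arbitrary `H`-module `V`. -/
def psi (ξ : Fin 2 → ℕ → H) (ω : ℕ → H) (z : ℕ → V) :
    MvPolynomial (Fin 3 × ℕ) F →+* TrivSqZeroExt H V :=
  eval₂Hom ((TrivSqZeroExt.inlHom H V).comp (algebraMap F H)) fun p =>
    if h : (p.1 : ℕ) < 2 then TrivSqZeroExt.inl (ξ ⟨p.1, h⟩ p.2)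
    else TrivSqZeroExt.inl (ω p.2) + TrivSqZeroExt.inr (z p.2)

/-- The differential of `f` at the point `(ξ, ω)` in the direction `z` of the `u`-variables. -/
def grad (ξ : Fin 2 → ℕ → H) (ω : ℕ → H) (z : ℕ → V) (f : MvPolynomial (Fin 3 × ℕ) F) : V :=
  (psi ξ ω z f).snd

/-- For `f` affine in the `u`-variables this is the homogenization of `f` at `x, y = ξ`:
`u_k` is replaced by `z k` and the constant term is multiplied by `c`. -/
def lam (ξ : Fin 2 → ℕ → H) (z : ℕ → V) (c : V) (f : MvPolynomial (Fin 3 × ℕ) F) : V :=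
  grad ξ 0 z f + evB ξ 0 f • c

variable {ξ : Fin 2 → ℕ → H} {ω : ℕ → H} {z z' : ℕ → V} {c c' : V}

theorem fst_psi (f : MvPolynomial (Fin 3 × ℕ) F) : (psi ξ ω z f).fst = evB ξ ω f := by
  have : (TrivSqZeroExt.fstHom H H V).toRingHom.comp (psi (F := F) ξ ω z) = evB ξ ω := by
    apply MvPolynomial.ringHom_ext
    · intro a; simp [psi, evB]
    · intro p
      simp only [psi, evB, RingHom.comp_apply, eval₂Hom_X']
      split_ifs <;> simp
  exact congrArg (fun g => g f) this

@[simp] theorem evB_C (a : F) : evB ξ ω (C a) = algebraMap F H a := by simp [evB]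

theorem evB_X (a : Fin 2) (k : ℕ) :
    evB ξ ω (X (a.castSucc, k) : MvPolynomial (Fin 3 × ℕ) F) = ξ a k := by
  fin_cases a <;> simp [evB]

theorem evB_U (k : ℕ) : evB ξ ω (X (2, k) : MvPolynomial (Fin 3 × ℕ) F) = ω k := by simp [evB]

@[simp] theorem grad_C (a : F) : grad ξ ω z (C a) = 0 := by simp [grad, psi]

@[simp] theorem grad_add (f g : MvPolynomial (Fin 3 × ℕ) F) :
    grad ξ ω z (f + g) = grad ξ ω z f + grad ξ ω z g := by simp [grad]

@[simp] theorem grad_sub (f g : MvPolynomial (Fin 3 × ℕ) F) :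
    grad ξ ω z (f - g) = grad ξ ω z f - grad ξ ω z g := by simp [grad]

theorem grad_mul (f g : MvPolynomial (Fin 3 × ℕ) F) :
    grad ξ ω z (f * g) = evB ξ ω f • grad ξ ω z g + evB ξ ω g • grad ξ ω z f := by
  simp [grad, fst_psi]

theorem grad_X (a : Fin 2) (k : ℕ) :
    grad ξ ω z (X (a.castSucc, k) : MvPolynomial (Fin 3 × ℕ) F) = 0 := by
  fin_cases a <;> simp [grad, psi]

theorem grad_U (k : ℕ) : grad ξ ω z (X (2, k) : MvPolynomial (Fin 3 × ℕ) F) = z k := by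
  simp [grad, psi]

theorem fin3_cases (p : Fin 3 × ℕ) : (∃ a : Fin 2, ∃ k, p = (a.castSucc, k)) ∨ ∃ k, p = (2, k) := by
  obtain ⟨i, k⟩ := p
  fin_cases i
  · exact Or.inl ⟨0, k, rfl⟩
  · exact Or.inl ⟨1, k, rfl⟩
  · exact Or.inr ⟨k, rfl⟩

section Derivations

variable {δF : Derivation ℤ F F} {Δ : Derivation ℤ H H}
  {d : Derivation ℤ (MvPolynomial (Fin 3 × ℕ) F) (MvPolynomial (Fin 3 × ℕ) F)}

theorem evB_d (hΔ : ∀ a : F, Δ (algebraMap F H a) = algebraMap F H (δF a))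
    (hdC : ∀ a : F, d (C a) = C (δF a)) (hdX : ∀ (i : Fin 3) (k : ℕ), d (X (i, k)) = X (i, k + 1))
    (hξ : ∀ a k, ξ a (k + 1) = Δ (ξ a k)) (hω : ∀ k, ω (k + 1) = Δ (ω k))
    (f : MvPolynomial (Fin 3 × ℕ) F) : evB ξ ω (d f) = Δ (evB ξ ω f) := by
  induction f using MvPolynomial.induction_on with
  | C a => simp [hdC, hΔ]
  | add f g hf hg => simp [hf, hg]
  | mul_X f p hf =>
    have hX : evB ξ ω (d (X p)) = Δ (evB ξ ω (X p : MvPolynomial (Fin 3 × ℕ) F)) := by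
      rcases fin3_cases p with ⟨a, k, rfl⟩ | ⟨k, rfl⟩
      · rw [hdX, evB_X, evB_X, hξ]
      · rw [hdX, evB_U, evB_U, hω]
    simp only [Derivation.leibniz, smul_eq_mul, map_add, map_mul, hf, hX]

/-- Commutation of linearization with derivations: `T` is a `Δ`-connection on `V`, and the defect
is again the linearization of `f`, in the direction `z (l + 1) - T (z l)`. -/
theorem grad_d (hΔ : ∀ a : F, Δ (algebraMap F H a) = algebraMap F H (δF a))
    (hdC : ∀ a : F, d (C a) = C (δF a)) (hdX : ∀ (i : Fin 3) (k : ℕ), d (X (i, k)) = X (i, k + 1))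
    (hξ : ∀ a k, ξ a (k + 1) = Δ (ξ a k)) (hω : ∀ k, ω (k + 1) = Δ (ω k))
    (T : V →+ V) (hT : ∀ (h : H) (v : V), T (h • v) = Δ h • v + h • T v)
    (f : MvPolynomial (Fin 3 × ℕ) F) :
    grad ξ ω z (d f) = T (grad ξ ω z f) + grad ξ ω (fun l => z (l + 1) - T (z l)) f := by
  induction f using MvPolynomial.induction_on with
  | C a => simp [hdC]
  | add f g hf hg => simp only [map_add, grad_add, hf, hg]; abel
  | mul_X f p hf =>
    have hX : grad ξ ω z (d (X p)) =
        T (grad ξ ω z (X p : MvPolynomial (Fin 3 × ℕ) F)) +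
          grad ξ ω (fun l => z (l + 1) - T (z l)) (X p : MvPolynomial (Fin 3 × ℕ) F) := by
      rcases fin3_cases p with ⟨a, k, rfl⟩ | ⟨k, rfl⟩
      · simp [hdX, grad_X]
      · simp [hdX, grad_U]
    simp only [Derivation.leibniz, smul_eq_mul, grad_add, grad_mul, hf, hX,
      evB_d hΔ hdC hdX hξ hω, map_add, hT, smul_add]
    abel

theorem lam_d (hΔ : ∀ a : F, Δ (algebraMap F H a) = algebraMap F H (δF a))
    (hdC : ∀ a : F, d (C a) = C (δF a)) (hdX : ∀ (i : Fin 3) (k : ℕ), d (X (i, k)) = X (i, k + 1))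
    (hξ : ∀ a k, ξ a (k + 1) = Δ (ξ a k))
    (T : V →+ V) (hT : ∀ (h : H) (v : V), T (h • v) = Δ h • v + h • T v)
    (f : MvPolynomial (Fin 3 × ℕ) F) :
    lam ξ z c (d f) = T (lam ξ z c f) + lam ξ (fun l => z (l + 1) - T (z l)) (-T c) f := by
  have h0 : ∀ k : ℕ, (0 : ℕ → H) (k + 1) = Δ ((0 : ℕ → H) k) := by simp
  simp only [lam, grad_d hΔ hdC hdX hξ h0 T hT, evB_d hΔ hdC hdX hξ h0, map_add, hT, smul_neg]
  abel

end Derivations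

@[simp] theorem lam_add (f g : MvPolynomial (Fin 3 × ℕ) F) :
    lam ξ z c (f + g) = lam ξ z c f + lam ξ z c g := by simp [lam, add_smul]; abel

@[simp] theorem lam_sub (f g : MvPolynomial (Fin 3 × ℕ) F) :
    lam ξ z c (f - g) = lam ξ z c f - lam ξ z c g := by simp [lam, sub_smul]; abel

theorem lam_X_mul (a : Fin 2) (k : ℕ) (f : MvPolynomial (Fin 3 × ℕ) F) :
    lam ξ z c (X (a.castSucc, k) * f) = ξ a k • lam ξ z c f := by
  simp [lam, grad_mul, evB_X, grad_X, mul_smul]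

theorem map_grad {V' : Type*} [AddCommGroup V'] [Module H V'] [Module Hᵐᵒᵖ V']
    [IsCentralScalar H V'] (φ : V →ₗ[H] V') (f : MvPolynomial (Fin 3 × ℕ) F) :
    φ (grad ξ ω z f) = grad ξ ω (fun l => φ (z l)) f := by
  induction f using MvPolynomial.induction_on with
  | C a => simp
  | add f g hf hg => simp [hf, hg]
  | mul_X f p hf =>
    have hX : φ (grad ξ ω z (X p : MvPolynomial (Fin 3 × ℕ) F)) =
        grad ξ ω (fun l => φ (z l)) (X p : MvPolynomial (Fin 3 × ℕ) F) := by
      rcases fin3_cases p with ⟨a, k, rfl⟩ | ⟨k, rfl⟩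
      · simp [grad_X]
      · simp [grad_U]
    simp only [grad_mul, map_add, map_smul, hf, hX]

theorem map_lam {V' : Type*} [AddCommGroup V'] [Module H V'] [Module Hᵐᵒᵖ V']
    [IsCentralScalar H V'] (φ : V →ₗ[H] V') (f : MvPolynomial (Fin 3 × ℕ) F) :
    φ (lam ξ z c f) = lam ξ (fun l => φ (z l)) (φ c) f := by
  simp [lam, map_grad]

/-- Linearity of `lam` in the direction, in the form of a linear combination. -/
theorem lam_sub_smul (h : H) (f : MvPolynomial (Fin 3 × ℕ) F) :
    lam ξ (fun l => z l - h • z' l) (c - h • c') f = lam ξ z c f - h • lam ξ z' c' f := by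
  have : grad ξ 0 (fun l => z l - h • z' l) f = grad ξ 0 z f - h • grad ξ 0 z' f := by
    induction f using MvPolynomial.induction_on with
    | C a => simp
    | add f g hf hg => simp only [grad_add, hf, hg, smul_add]; abel
    | mul_X f p hf =>
      have hX : grad ξ 0 (fun l => z l - h • z' l) (X p : MvPolynomial (Fin 3 × ℕ) F) =
          grad ξ 0 z (X p : MvPolynomial (Fin 3 × ℕ) F) -
            h • grad ξ 0 z' (X p : MvPolynomial (Fin 3 × ℕ) F) := by
        rcases fin3_cases p with ⟨a, k, rfl⟩ | ⟨k, rfl⟩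
        · simp [grad_X]
        · simp [grad_U]
      simp only [grad_mul, hf, hX, smul_sub, smul_add, smul_comm h]
      abel
  simp only [lam, this, smul_sub, smul_add, smul_comm h]
  abel

theorem lam_zero (f : MvPolynomial (Fin 3 × ℕ) F) : lam ξ (fun _ => (0 : V)) 0 f = 0 := by
  simpa using (map_lam (ξ := ξ) (z := fun _ => (0 : V)) (c := 0) (0 : V →ₗ[H] V) f).symm

end Linearization

/-! ### Differential polynomials of degree at most one -/

section AffinePolynomials

variable {F}

/-- The inclusion `F{u} → F{x,y,u}`. -/
def hat : MvPolynomial ℕ F →ₐ[F] MvPolynomial (Fin 3 × ℕ) F := rename fun k => ((2 : Fin 3), k)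

/-- The hypotheses on the two fractions `P a / Q a`, indexed by `a : Fin 2`. -/
structure Fractions (P Q : Fin 2 → MvPolynomial ℕ F) (m : Fin 2 → ℕ) : Prop where
  degP : ∀ a, (P a).totalDegree ≤ 1
  degQ : ∀ a, (Q a).totalDegree ≤ 1
  rel : ∀ a, IsRelPrime (P a) (Q a)
  ord : ∀ a, max (ordU (P a)) (ordU (Q a)) = (m a : WithBot ℕ)

/-- `d^k f_a`, where `f_a = x₀ Q_a - P_a` for `a = 0` and `f_a = y₀ Q_a - P_a` for `a = 1`. -/
def fd (d : Derivation ℤ (MvPolynomial (Fin 3 × ℕ) F) (MvPolynomial (Fin 3 × ℕ) F))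
    (P Q : Fin 2 → MvPolynomial ℕ F) (a : Fin 2) (k : ℕ) : MvPolynomial (Fin 3 × ℕ) F :=
  (⇑d)^[k] (X (a.castSucc, 0) * hat (Q a) - hat (P a))

/-- The affine operator of `Q` with coefficients up to order `m`, homogenized: the constant term
is multiplied by `c`. -/
def aff {H V : Type*} [Field H] [Algebra F H] [AddCommGroup V] [Module H V]
    (m : ℕ) (Q : MvPolynomial ℕ F) (z : ℕ → V) (c : V) : V :=
  ∑ l ∈ Finset.range (m + 1), algebraMap F H (coeff (Finsupp.single l 1) Q) • z l +
    algebraMap F H (coeff 0 Q) • c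

/-- A monomial of a polynomial of total degree at most one is constant or a single variable. -/
theorem eq_single_of_mem_support {Q : MvPolynomial ℕ F} (hd : Q.totalDegree ≤ 1) {s : ℕ →₀ ℕ}
    (hs : s ∈ Q.support) (h0 : s ≠ 0) : ∃ l, s = Finsupp.single l 1 := by
  have hcon : ∑ i ∈ s.support, s i ≤ 1 := (le_totalDegree hs).trans hd
  obtain ⟨l, hl⟩ := Finsupp.ne_iff.1 h0
  have hl : s l ≠ 0 := hl
  have hle : ∀ i ∈ s.support, s i + ∑ j ∈ s.support.erase i, s j ≤ 1 := by
    intro i hi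
    rwa [Finset.add_sum_erase _ _ hi]
  refine ⟨l, ?_⟩
  ext j
  have hll := hle l (Finsupp.mem_support_iff.2 hl)
  by_cases hj : j = l
  · subst hj
    rw [Finsupp.single_eq_same]
    omega
  · rw [Finsupp.single_eq_of_ne hj]
    by_contra hne
    have := Finset.single_le_sum (f := fun j => s j) (fun i _ => Nat.zero_le _)
      (Finset.mem_erase.2 ⟨hj, Finsupp.mem_support_iff.2 hne⟩)
    omega

theorem affine_form {Q : MvPolynomial ℕ F} {m : ℕ} (hd : Q.totalDegree ≤ 1)
    (ho : ordU Q ≤ (m : WithBot ℕ)) :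
    Q = ∑ l ∈ Finset.range (m + 1), C (coeff (Finsupp.single l 1) Q) * X l + C (coeff 0 Q) := by
  have hz : ∀ l, m < l → coeff (Finsupp.single l 1) Q = 0 := by
    intro l hl
    by_contra hne
    have hmem : l ∈ Q.vars := (mem_vars_iff_mem_support l).2 ⟨_, mem_support_iff.2 hne, by simp⟩
    have h1 : (l : WithBot ℕ) ≤ (m : WithBot ℕ) := (Finset.le_max hmem).trans ho
    exact absurd (WithBot.coe_le_coe.1 h1) (not_le.2 hl)
  ext s
  simp only [coeff_add, coeff_sum, coeff_C_mul, coeff_X, coeff_C, mul_ite, mul_one, mul_zero]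
  by_cases h0 : s = 0
  · subst h0
    rw [Finset.sum_eq_zero]
    · simp
    · intro l _
      rw [if_neg]
      simp
  · rw [if_neg (Ne.symm h0), add_zero]
    by_cases h1 : ∃ l, s = Finsupp.single l 1
    · obtain ⟨l, rfl⟩ := h1
      have : ∀ k, (Finsupp.single k 1 = (Finsupp.single l 1 : ℕ →₀ ℕ)) ↔ k = l := by
        intro k
        simp [Finsupp.single_left_inj]
      simp only [this, Finset.sum_ite_eq', Finset.mem_range]
      split_ifs with h
      · rfl
      · exact hz l (by omega)
    · push Not at h1
      rw [Finset.sum_eq_zero (fun l _ => if_neg (Ne.symm (h1 l)))]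
      by_contra hne
      obtain ⟨l, hl⟩ := eq_single_of_mem_support hd (mem_support_iff.2 hne) h0
      exact h1 l hl

section Eval

variable {H : Type*} [Field H] [Algebra F H]
variable {V : Type*} [AddCommGroup V] [Module H V] [Module Hᵐᵒᵖ V] [IsCentralScalar H V]
variable {ξ : Fin 2 → ℕ → H} {ω : ℕ → H} {z z' : ℕ → V} {c c' : V}

theorem hat_C (a : F) : hat (C a) = C a := by simp [hat]

theorem hat_X (k : ℕ) : hat (X k : MvPolynomial ℕ F) = X (2, k) := by simp [hat]

theorem grad_sum {ι : Type*} (s : Finset ι) (f : ι → MvPolynomial (Fin 3 × ℕ) F) :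
    grad ξ ω z (∑ i ∈ s, f i) = ∑ i ∈ s, grad ξ ω z (f i) := by
  classical
  induction s using Finset.induction_on with
  | empty => simpa using grad_C (ξ := ξ) (ω := ω) (z := z) (0 : F)
  | insert a s ha ih => simp [Finset.sum_insert ha, ih]

theorem grad_hat {Q : MvPolynomial ℕ F} {m : ℕ} (hd : Q.totalDegree ≤ 1)
    (ho : ordU Q ≤ (m : WithBot ℕ)) :
    grad ξ ω z (hat Q) =
      ∑ l ∈ Finset.range (m + 1), algebraMap F H (coeff (Finsupp.single l 1) Q) • z l := by
  conv_lhs => rw [affine_form hd ho]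
  simp [hat_X, grad_sum, grad_mul, grad_U]

theorem evB_hat (Q : MvPolynomial ℕ F) : evB ξ ω (hat Q) = aeval ω Q := by
  have : (evB (F := F) ξ ω).comp (hat : MvPolynomial ℕ F →ₐ[F] _).toRingHom
      = (aeval ω : MvPolynomial ℕ F →ₐ[F] H).toRingHom := by
    apply MvPolynomial.ringHom_ext
    · intro a; simp
    · intro k; simp [hat_X, evB_U]
  exact congrArg (fun g => g Q) this

theorem lam_hat {Q : MvPolynomial ℕ F} {m : ℕ} (hd : Q.totalDegree ≤ 1)
    (ho : ordU Q ≤ (m : WithBot ℕ)) : lam ξ z c (hat Q) = aff (H := H) m Q z c := by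
  rw [lam, grad_hat hd ho, evB_hat, aff]
  congr 2
  conv_lhs => rw [affine_form hd ho]
  simp

/-- The coefficient of the highest derivative `u_{m_a + k}` in `d^k f_a`, evaluated at `ξ`. -/
def lc (P Q : Fin 2 → MvPolynomial ℕ F) (m : Fin 2 → ℕ) (ξ : Fin 2 → ℕ → H) (a : Fin 2) : H :=
  ξ a 0 * algebraMap F H (coeff (Finsupp.single (m a) 1) (Q a)) -
    algebraMap F H (coeff (Finsupp.single (m a) 1) (P a))

variable {P Q : Fin 2 → MvPolynomial ℕ F} {m : Fin 2 → ℕ}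

theorem Fractions.ordP (h : Fractions P Q m) (a : Fin 2) : ordU (P a) ≤ (m a : WithBot ℕ) :=
  (le_max_left _ _).trans (h.ord a).le

theorem Fractions.ordQ (h : Fractions P Q m) (a : Fin 2) : ordU (Q a) ≤ (m a : WithBot ℕ) :=
  (le_max_right _ _).trans (h.ord a).le

variable {δF : Derivation ℤ F F} {Δ : Derivation ℤ H H}
  {d : Derivation ℤ (MvPolynomial (Fin 3 × ℕ) F) (MvPolynomial (Fin 3 × ℕ) F)}

theorem fd_zero (a : Fin 2) : fd d P Q a 0 = X (a.castSucc, 0) * hat (Q a) - hat (P a) := rfl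

theorem fd_succ (a : Fin 2) (k : ℕ) : fd d P Q a (k + 1) = d (fd d P Q a k) :=
  Function.iterate_succ_apply' _ _ _

theorem lam_fd_zero (h : Fractions P Q m) (a : Fin 2) :
    lam ξ z c (fd d P Q a 0) = ξ a 0 • aff (H := H) (m a) (Q a) z c - aff (H := H) (m a) (P a) z c := by
  rw [fd_zero, lam_sub, lam_X_mul, lam_hat (h.degQ a) (h.ordQ a), lam_hat (h.degP a) (h.ordP a)]

/-- `d^k f_a` is affine in the `u`-variables with leading term `lc_a u_{m_a + k}`. -/
theorem lam_fd_top (h : Fractions P Q m)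
    (hΔ : ∀ a : F, Δ (algebraMap F H a) = algebraMap F H (δF a))
    (hdC : ∀ a : F, d (C a) = C (δF a)) (hdX : ∀ (i : Fin 3) (k : ℕ), d (X (i, k)) = X (i, k + 1))
    (hξ : ∀ a k, ξ a (k + 1) = Δ (ξ a k))
    (T : V →+ V) (hT : ∀ (h : H) (v : V), T (h • v) = Δ h • v + h • T v) (a : Fin 2) (k : ℕ)
    (z : ℕ → V) (hz : ∀ l < m a + k, z l = 0) :
    lam ξ z 0 (fd d P Q a k) = lc P Q m ξ a • z (m a + k) := by
  induction k generalizing z with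
  | zero =>
    have key : ∀ R : MvPolynomial ℕ F, aff (H := H) (m a) R z 0 =
        algebraMap F H (coeff (Finsupp.single (m a) 1) R) • z (m a) := by
      intro R
      rw [aff, Finset.sum_range_succ, Finset.sum_eq_zero]
      · simp
      · intro l hl
        rw [hz l (by simpa using hl), smul_zero]
    rw [lam_fd_zero h, key, key, lc, sub_smul, mul_smul]
    rfl
  | succ k ih =>
    rw [fd_succ, lam_d hΔ hdC hdX hξ T hT, ih z (fun l hl => hz l (by omega)),
      hz (m a + k) (by omega), map_zero, neg_zero, smul_zero, map_zero, zero_add, ih]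
    · rw [hz (m a + k) (by omega), map_zero, sub_zero]
      rfl
    · intro l hl
      rw [hz (l + 1) (by omega), hz l (by omega), map_zero, sub_zero]

/-- `lam` of `d^k f_a` only involves the directions `z l` with `l ≤ m_a + k`; changing the last one
changes the value through `lc_a`. -/
theorem lam_fd_congr (h : Fractions P Q m)
    (hΔ : ∀ a : F, Δ (algebraMap F H a) = algebraMap F H (δF a))
    (hdC : ∀ a : F, d (C a) = C (δF a)) (hdX : ∀ (i : Fin 3) (k : ℕ), d (X (i, k)) = X (i, k + 1))
    (hξ : ∀ a k, ξ a (k + 1) = Δ (ξ a k))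
    (T : V →+ V) (hT : ∀ (h : H) (v : V), T (h • v) = Δ h • v + h • T v) (a : Fin 2) (k : ℕ)
    (hz : ∀ l < m a + k, z l = z' l) :
    lam ξ z c (fd d P Q a k) = lam ξ z' c (fd d P Q a k) +
      lc P Q m ξ a • (z (m a + k) - z' (m a + k)) := by
  have h1 := lam_sub_smul (ξ := ξ) (z := z) (z' := z') (c := c) (c' := c) (1 : H) (fd d P Q a k)
  simp only [one_smul, sub_self] at h1
  rw [lam_fd_top h hΔ hdC hdX hξ T hT a k (fun l => z l - z' l)
    (fun l hl => by simp [hz l hl])] at h1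
  rw [h1]
  abel

/-- The differential of `d^k f_a` does not depend on the base point. -/
theorem grad_fd (h : Fractions P Q m)
    (hΔ : ∀ a : F, Δ (algebraMap F H a) = algebraMap F H (δF a))
    (hdC : ∀ a : F, d (C a) = C (δF a)) (hdX : ∀ (i : Fin 3) (k : ℕ), d (X (i, k)) = X (i, k + 1))
    (hξ : ∀ a k, ξ a (k + 1) = Δ (ξ a k)) (hω : ∀ k, ω (k + 1) = Δ (ω k))
    (T : V →+ V) (hT : ∀ (h : H) (v : V), T (h • v) = Δ h • v + h • T v) (a : Fin 2) (k : ℕ)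
    (z : ℕ → V) : grad ξ ω z (fd d P Q a k) = lam ξ z 0 (fd d P Q a k) := by
  induction k generalizing z with
  | zero =>
    rw [fd_zero, lam, smul_zero, add_zero, grad_sub, grad_sub, grad_mul, grad_mul, evB_X, evB_X,
      grad_X, grad_X, smul_zero, smul_zero, grad_hat (h.degQ a) (h.ordQ a),
      grad_hat (h.degP a) (h.ordP a), grad_hat (h.degQ a) (h.ordQ a),
      grad_hat (h.degP a) (h.ordP a)]
  | succ k ih =>
    rw [fd_succ, lam_d hΔ hdC hdX hξ T hT, grad_d hΔ hdC hdX hξ hω T hT, ih, ih, map_zero, neg_zero]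

end Eval

end AffinePolynomials

/-! ### The point `η` and the supports of the row polynomials -/

section Coprimality

variable {F}
variable {P Q : Fin 2 → MvPolynomial ℕ F} {m : Fin 2 → ℕ}

theorem coeff_single_ne_zero_of_ord {Q : MvPolynomial ℕ F} {m : ℕ} (hd : Q.totalDegree ≤ 1)
    (ho : ordU Q = (m : WithBot ℕ)) : coeff (Finsupp.single m 1) Q ≠ 0 := by
  have hmem : m ∈ Q.vars := Finset.mem_of_max ho
  obtain ⟨s, hs, hms⟩ := (mem_vars_iff_mem_support m).1 hmem
  have h0 : s ≠ 0 := by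
    rintro rfl
    simp at hms
  obtain ⟨l, rfl⟩ := eq_single_of_mem_support hd hs h0
  have : m = l := by simpa using hms
  subst this
  exact mem_support_iff.1 hs

theorem coeff_single_eq_zero_of_isUnit {Q : MvPolynomial ℕ F} (h : IsUnit Q) (l : ℕ) :
    coeff (Finsupp.single l 1) Q = 0 :=
  ((MvPolynomial.isUnit_iff.1 h).2 _ (by simp)).eq_zero

theorem Fractions.coeff_ne_zero (h : Fractions P Q m) (a : Fin 2) :
    coeff (Finsupp.single (m a) 1) (P a) ≠ 0 ∨ coeff (Finsupp.single (m a) 1) (Q a) ≠ 0 := by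
  rcases max_choice (ordU (P a)) (ordU (Q a)) with h1 | h1
  · exact Or.inl (coeff_single_ne_zero_of_ord (h.degP a) (h1 ▸ h.ord a))
  · exact Or.inr (coeff_single_ne_zero_of_ord (h.degQ a) (h1 ▸ h.ord a))

theorem Fractions.Q_ne_zero (h : Fractions P Q m) (a : Fin 2) : Q a ≠ 0 := by
  intro h0
  have hu : IsUnit (P a) := h.rel a dvd_rfl (h0 ▸ dvd_zero _)
  rcases h.coeff_ne_zero a with h1 | h1
  · exact h1 (coeff_single_eq_zero_of_isUnit hu _)
  · exact h1 (by rw [h0]; simp)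

/-- The combination of `P a` and `Q a` in which the highest derivative cancels. -/
def cross (P Q : Fin 2 → MvPolynomial ℕ F) (m : Fin 2 → ℕ) (a : Fin 2) : MvPolynomial ℕ F :=
  C (coeff (Finsupp.single (m a) 1) (Q a)) * P a - C (coeff (Finsupp.single (m a) 1) (P a)) * Q a

theorem Fractions.cross_ne_zero (h : Fractions P Q m) (a : Fin 2) : cross P Q m a ≠ 0 := by
  intro h0
  have h0 := sub_eq_zero.1 h0
  have key : ∀ {p q : F} {A B : MvPolynomial ℕ F}, q ≠ 0 → C q * A = C p * B → B ∣ A := by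
    intro p q A B hq hAB
    refine ⟨C (q⁻¹ * p), ?_⟩
    calc A = C (q⁻¹) * (C q * A) := by rw [← mul_assoc, ← C_mul, inv_mul_cancel₀ hq, C_1, one_mul]
      _ = B * C (q⁻¹ * p) := by rw [hAB, C_mul]; ring
  by_cases hq : coeff (Finsupp.single (m a) 1) (Q a) = 0
  · have hp := (h.coeff_ne_zero a).resolve_right (not_not.2 hq)
    exact hp (coeff_single_eq_zero_of_isUnit (h.rel a dvd_rfl (key hp h0.symm)) _)
  · exact hq (coeff_single_eq_zero_of_isUnit (h.rel a (key hq h0) dvd_rfl) _)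

variable {D : Derivation ℤ E E} {u : E}

theorem DiffTrans.eval_ne_zero (hu : DiffTrans F D u) {R : MvPolynomial ℕ F} (hR : R ≠ 0) :
    evalD F D u R ≠ 0 := by
  intro h0
  exact hR (hu (by simpa [evalD] using h0))

/-- The curve point `η_a = P_a(u) / Q_a(u)` together with all its derivatives. -/
def eta (D : Derivation ℤ E E) (u : E) (P Q : Fin 2 → MvPolynomial ℕ F) (a : Fin 2) (k : ℕ) : E :=
  (⇑D)^[k] (evalD F D u (P a) / evalD F D u (Q a))

theorem eta_succ (a : Fin 2) (k : ℕ) : eta D u P Q a (k + 1) = D (eta D u P Q a k) :=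
  Function.iterate_succ_apply' _ _ _

theorem lc_eta_ne_zero (h : Fractions P Q m) (hu : DiffTrans F D u) (a : Fin 2) :
    lc P Q m (eta D u P Q) a ≠ 0 := by
  have hQ := hu.eval_ne_zero (h.Q_ne_zero a)
  have hc := hu.eval_ne_zero (h.cross_ne_zero a)
  intro h0
  apply hc
  simp only [lc, eta, Function.iterate_zero, id] at h0
  field_simp at h0
  simp only [cross, map_sub, map_mul]
  simp only [evalD, aeval_C] at h0 ⊢
  linear_combination h0

end Coprimality

section Supports

variable {F}

/-- The variables `u_k` together with the variables `x_k, y_k` in `S`. -/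
def up (S : Set (Fin 2 × ℕ)) : Set (Fin 3 × ℕ) := {p | p.1 = 2 ∨ ∃ q ∈ S, p = (q.1.castSucc, q.2)}

theorem up_mono {S T : Set (Fin 2 × ℕ)} (h : S ⊆ T) : up S ⊆ up T := by
  rintro p (hp | ⟨q, hq, rfl⟩)
  · exact Or.inl hp
  · exact Or.inr ⟨q, h hq, rfl⟩

theorem derivation_mem_supported {σ : Type*} {d : Derivation ℤ (MvPolynomial σ F) (MvPolynomial σ F)}
    {S T : Set σ} (hST : S ⊆ T) (hC : ∀ a : F, d (C a) ∈ supported F T)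
    (hX : ∀ p ∈ S, d (X p) ∈ supported F T) {f : MvPolynomial σ F} (hf : f ∈ supported F S) :
    d f ∈ supported F T := by
  rw [supported_eq_adjoin_X] at hf
  have hsub : Algebra.adjoin F (X '' S : Set (MvPolynomial σ F)) ≤ supported F T :=
    supported_mono hST
  induction hf using Algebra.adjoin_induction with
  | mem x hx => obtain ⟨p, hp, rfl⟩ := hx; exact hX p hp
  | algebraMap r => exact hC r
  | add x y hx hy ihx ihy => rw [map_add]; exact add_mem ihx ihy
  | mul x y hx hy ihx ihy =>
    rw [Derivation.leibniz]
    exact add_mem (mul_mem (hsub hx) ihy) (mul_mem (hsub hy) ihx)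

theorem pderiv_mem_supported {σ : Type*} {S : Set σ} {f : MvPolynomial σ F}
    (hf : f ∈ supported F S) (i : σ) : pderiv i f ∈ supported F S := by
  classical
  have := derivation_mem_supported (d := (pderiv i).restrictScalars ℤ) (T := S) subset_rfl
    (fun a => by simp) (fun p _ => ?_) hf
  · simpa using this
  · simp only [Derivation.restrictScalars_apply, pderiv_X]
    by_cases h : p = i
    · subst h
      simp
    · simp [h]

theorem hat_mem_supported (R : MvPolynomial ℕ F) (S : Set (Fin 2 × ℕ)) :
    hat R ∈ supported F (up S) := by
  induction R using MvPolynomial.induction_on with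
  | C a => rw [hat_C]; exact (supported F (up S)).algebraMap_mem a
  | add f g hf hg => rw [map_add]; exact add_mem hf hg
  | mul_X f k hf =>
    rw [map_mul, hat_X]
    exact mul_mem hf (X_mem_supported.2 (Or.inl rfl))

theorem projXY_mem_supported {f : MvPolynomial (Fin 3 × ℕ) F} {S : Set (Fin 2 × ℕ)}
    (hf : f ∈ supported F (up S)) : projXY F f ∈ supported F S := by
  rw [supported_eq_adjoin_X] at hf
  induction hf using Algebra.adjoin_induction with
  | mem x hx =>
    obtain ⟨p, hp, rfl⟩ := hx
    rcases hp with hp | ⟨⟨b, k⟩, hq, rfl⟩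
    · simp [projXY, hp]
    · have : projXY F (X (b.castSucc, k)) = X (b, k) := by fin_cases b <;> simp [projXY]
      rw [this]
      exact X_mem_supported.2 hq
  | algebraMap r => rw [AlgHom.commutes]; exact (supported F S).algebraMap_mem r
  | add x y hx hy ihx ihy => rw [map_add]; exact add_mem ihx ihy
  | mul x y hx hy ihx ihy => rw [map_mul]; exact mul_mem ihx ihy

variable {P Q : Fin 2 → MvPolynomial ℕ F} {m : Fin 2 → ℕ} {δF : Derivation ℤ F F}
  {d : Derivation ℤ (MvPolynomial (Fin 3 × ℕ) F) (MvPolynomial (Fin 3 × ℕ) F)}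

/-- The part of `d^k f_a` left after splitting off the term with the derivative of `x` or `y` of
order `k`. -/
def rest (d : Derivation ℤ (MvPolynomial (Fin 3 × ℕ) F) (MvPolynomial (Fin 3 × ℕ) F))
    (P Q : Fin 2 → MvPolynomial ℕ F) (a : Fin 2) (k : ℕ) : MvPolynomial (Fin 3 × ℕ) F :=
  fd d P Q a k - X (a.castSucc, k) * hat (Q a)

theorem rest_mem_supported (hdC : ∀ a : F, d (C a) = C (δF a))
    (hdX : ∀ (i : Fin 3) (k : ℕ), d (X (i, k)) = X (i, k + 1)) (a : Fin 2) (k : ℕ) :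
    rest d P Q a k ∈ supported F (up {p | p.1 = a ∧ p.2 < k}) := by
  have step : ∀ (k : ℕ) (f : MvPolynomial (Fin 3 × ℕ) F),
      f ∈ supported F (up {p | p.1 = a ∧ p.2 < k}) →
      d f ∈ supported F (up {p | p.1 = a ∧ p.2 < k + 1}) := by
    intro k f hf
    refine derivation_mem_supported (up_mono (T := {p | p.1 = a ∧ p.2 < k + 1})
      fun p hp => ⟨hp.1, by have := hp.2; omega⟩) (fun r => ?_) ?_ hf
    · rw [hdC]; exact (supported F _).algebraMap_mem _
    · rintro ⟨i, l⟩ (hp | ⟨q, hq, hp⟩)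
      · rw [hdX]; exact X_mem_supported.2 (Or.inl hp)
      · obtain ⟨rfl, rfl⟩ := Prod.mk.inj hp
        rw [hdX]
        exact X_mem_supported.2 (Or.inr ⟨(q.1, q.2 + 1), ⟨hq.1, by have := hq.2; simpa using this⟩, rfl⟩)
  induction k with
  | zero =>
    rw [rest, fd_zero, sub_sub_cancel_left]
    exact neg_mem (hat_mem_supported _ _)
  | succ k ih =>
    have : rest d P Q a (k + 1) =
        X (a.castSucc, k) * d (hat (Q a)) + d (rest d P Q a k) := by
      simp only [rest, fd_succ, map_sub, Derivation.leibniz, smul_eq_mul, hdX]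
      ring
    rw [this]
    exact add_mem (mul_mem (X_mem_supported.2 (Or.inr ⟨(a, k), ⟨rfl, Nat.lt_succ_self k⟩, rfl⟩))
      (step k _ (hat_mem_supported _ _))) (step k _ ih)

theorem fd_eq (a : Fin 2) (k : ℕ) :
    fd d P Q a k = X (a.castSucc, k) * hat (Q a) + rest d P Q a k := by
  rw [rest]; ring

end Supports

/-! ### The order of the resultant in terms of its minors -/

section ResultantMatrix

variable {F}

/-- The `j`-th coefficient of `g` with respect to `u_n, …, u_0, 1`. -/
def cv (n : ℕ) (g : MvPolynomial (Fin 3 × ℕ) F) (j : ℕ) : MvPolynomial (Fin 2 × ℕ) F :=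
  if j ≤ n then projXY F (pderiv ((2 : Fin 3), n - j) g) else projXY F g

/-- The index of the polynomial whose derivative is in row `i` of the resultant matrix. -/
def rb (m : Fin 2 → ℕ) (i : ℕ) : Fin 2 := if i ≤ m 1 then 0 else 1

/-- The order of the derivative which is in row `i` of the resultant matrix. -/
def rk (m : Fin 2 → ℕ) (i : ℕ) : ℕ := if i ≤ m 1 then m 1 - i else m 0 + m 1 + 1 - i

/-- The row of the highest derivative of `f_a` in the resultant matrix. -/
def top (m : Fin 2 → ℕ) (a : Fin 2) : Fin (m 0 + m 1 + 2) :=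
  ⟨if a = 0 then 0 else m 1 + 1, by split_ifs <;> omega⟩

variable (d : Derivation ℤ (MvPolynomial (Fin 3 × ℕ) F) (MvPolynomial (Fin 3 × ℕ) F))
  (P Q : Fin 2 → MvPolynomial ℕ F) (m : Fin 2 → ℕ)

/-- The differential resultant matrix. -/
def resMat : Matrix (Fin (m 0 + m 1 + 2)) (Fin (m 0 + m 1 + 2)) (MvPolynomial (Fin 2 × ℕ) F) :=
  Matrix.of fun i j => cv (m 0 + m 1) (fd d P Q (rb m i) (rk m i)) j

/-- The resultant matrix with the row of the highest derivative of `f_a` replaced by the coefficients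
of `Q_a`. Its determinant is the coefficient of `x_{m₂}` (for `a = 0`) or `y_{m₁}` (for `a = 1`) in
the resultant. -/
def resMatQ (a : Fin 2) :
    Matrix (Fin (m 0 + m 1 + 2)) (Fin (m 0 + m 1 + 2)) (MvPolynomial (Fin 2 × ℕ) F) :=
  (resMat d P Q m).updateRow (top m a) fun j => cv (m 0 + m 1) (hat (Q a)) j

/-- The resultant matrix with the row of the highest derivative `d^k f_a` replaced by its part of
order less than `k` in `x` or `y`. -/
def resMatRest (a : Fin 2) :
    Matrix (Fin (m 0 + m 1 + 2)) (Fin (m 0 + m 1 + 2)) (MvPolynomial (Fin 2 × ℕ) F) :=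
  (resMat d P Q m).updateRow (top m a) fun j => cv (m 0 + m 1) (rest d P Q a (m a.rev)) j

theorem deltaRes_eq : deltaRes F d (P 0) (Q 0) (P 1) (Q 1) (m 0) (m 1) = (resMat d P Q m).det := by
  unfold deltaRes resMat
  congr 2
  ext i j : 2
  have : resRow F d (P 0) (Q 0) (P 1) (Q 1) (m 0) (m 1) i = fd d P Q (rb m i) (rk m i) := by
    unfold resRow rb rk
    split_ifs <;> rfl
  rw [this]
  rfl

variable {d P Q m}

theorem rb_top (a : Fin 2) : rb m (top m a) = a := by
  fin_cases a <;> simp [rb, top]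

theorem rk_top (a : Fin 2) : rk m (top m a) = m a.rev := by
  fin_cases a
  · simp [rk, top]
  · simp [rk, top]

theorem exists_row (b : Fin 2) {k : ℕ} (hk : k ≤ m b.rev) :
    ∃ i : Fin (m 0 + m 1 + 2), rb m i = b ∧ rk m i = k := by
  fin_cases b
  · have hk : k ≤ m 1 := hk
    refine ⟨⟨m 1 - k, by omega⟩, by simp [rb], ?_⟩
    simp [rk]
    omega
  · have hk : k ≤ m 0 := hk
    have : ¬ (m 0 + m 1 + 1 - k ≤ m 1) := by omega
    refine ⟨⟨m 0 + m 1 + 1 - k, by omega⟩, by simp [rb, this], ?_⟩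
    simp only [rk, this, if_false]
    omega

theorem rk_le (i : Fin (m 0 + m 1 + 2)) : rk m i ≤ m (rb m i).rev := by
  unfold rk rb
  split_ifs
  · exact Nat.sub_le _ _
  · change _ ≤ m 0
    omega

theorem eq_top {i : Fin (m 0 + m 1 + 2)} {a : Fin 2} (h1 : rb m i = a) (h2 : rk m i = m a.rev) :
    i = top m a := by
  subst h1
  ext
  unfold top
  unfold rb at h2 ⊢
  unfold rk at h2
  split_ifs at h2 ⊢ with h3 h4
  · change m 1 - (i : ℕ) = m 1 at h2
    change (i : ℕ) = 0
    omega
  · exact absurd rfl h4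
  · rename_i h4
    exact absurd h4 (by decide)
  · change m 0 + m 1 + 1 - (i : ℕ) = m 0 at h2
    change (i : ℕ) = m 1 + 1
    have := i.2
    omega

theorem cv_add (n : ℕ) (f g : MvPolynomial (Fin 3 × ℕ) F) (j : ℕ) :
    cv n (f + g) j = cv n f j + cv n g j := by
  unfold cv; split_ifs <;> simp

theorem cv_X_mul (n : ℕ) (a : Fin 2) (k : ℕ) (f : MvPolynomial (Fin 3 × ℕ) F) (j : ℕ) :
    cv n (X (a.castSucc, k) * f) j = X (a, k) * cv n f j := by
  have hne : ∀ l, ((a.castSucc, k) : Fin 3 × ℕ) ≠ (2, l) := by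
    intro l h
    have := (Prod.mk.inj h).1
    fin_cases a <;> simp at this
  have hp : projXY F (X (a.castSucc, k)) = X (a, k) := by fin_cases a <;> simp [projXY]
  unfold cv
  split_ifs
  · rw [pderiv_mul, pderiv_X_of_ne (hne _), zero_mul, zero_add, map_mul, hp]
  · rw [map_mul, hp]

theorem cv_mem_supported {n : ℕ} {f : MvPolynomial (Fin 3 × ℕ) F} {S : Set (Fin 2 × ℕ)}
    (hf : f ∈ supported F (up S)) (j : ℕ) : cv n f j ∈ supported F S := by
  unfold cv
  split_ifs
  · exact projXY_mem_supported (pderiv_mem_supported hf _)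
  · exact projXY_mem_supported hf

/-- The variables of order at most `m₂` in `x` and at most `m₁` in `y`, without the one of highest
order belonging to `f_a`. -/
def varsBelow (m : Fin 2 → ℕ) (a : Fin 2) : Set (Fin 2 × ℕ) :=
  {p | p.2 ≤ m p.1.rev ∧ p ≠ (a, m a.rev)}

theorem det_mem_supported {n : Type*} [Fintype n] [DecidableEq n] {σ : Type*} {S : Set σ}
    {M : Matrix n n (MvPolynomial σ F)} (h : ∀ i j, M i j ∈ supported F S) :
    M.det ∈ supported F S := by
  rw [Matrix.det_apply]
  refine sum_mem fun τ _ => ?_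
  have := prod_mem (S := supported F S) (t := Finset.univ) (f := fun i => M (τ i) i)
    fun i _ => h _ _
  rcases Int.units_eq_one_or (Equiv.Perm.sign τ) with h1 | h1
  · simpa [h1] using this
  · simpa [h1] using this

theorem det_resMat (a : Fin 2) : (resMat d P Q m).det =
    X (a, m a.rev) * (resMatQ d P Q m a).det + (resMatRest d P Q m a).det := by
  rw [resMatQ, resMatRest, ← Matrix.det_updateRow_smul,
    ← Matrix.det_updateRow_add]
  congr 1
  ext i j : 2
  rw [Matrix.updateRow_apply]
  split_ifs with h
  · subst h
    simp only [resMat, Matrix.of_apply, rb_top, rk_top, Pi.add_apply, Pi.smul_apply, smul_eq_mul]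
    rw [← cv_X_mul, ← cv_add, ← fd_eq]
  · rfl

section

variable {δF : Derivation ℤ F F} (hdC : ∀ a : F, d (C a) = C (δF a))
  (hdX : ∀ (i : Fin 3) (k : ℕ), d (X (i, k)) = X (i, k + 1))

include hdC hdX

theorem resMat_mem {a : Fin 2} {i : Fin (m 0 + m 1 + 2)} (hi : i ≠ top m a)
    (j : Fin (m 0 + m 1 + 2)) : resMat d P Q m i j ∈ supported F (varsBelow m a) := by
  apply cv_mem_supported
  rw [fd_eq]
  refine add_mem (mul_mem (X_mem_supported.2 (Or.inr ⟨(rb m i, rk m i), ⟨rk_le i, ?_⟩, rfl⟩))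
    (hat_mem_supported _ _)) (supported_mono (up_mono ?_) (rest_mem_supported hdC hdX _ _))
  · intro h
    obtain ⟨h1, h2⟩ := Prod.mk.inj h
    exact hi (eq_top h1 h2)
  · rintro ⟨b, k⟩ ⟨h1, h2⟩
    simp only at h1 h2
    have hle := rk_le i
    rw [← h1] at hle
    refine ⟨by simp only; omega, fun h => ?_⟩
    obtain ⟨h3, h4⟩ := Prod.mk.inj h
    subst h3
    omega

theorem det_resMatQ_mem (a : Fin 2) : (resMatQ d P Q m a).det ∈ supported F (varsBelow m a) := by
  apply det_mem_supported
  intro i j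
  rw [resMatQ, Matrix.updateRow_apply]
  split_ifs with h
  · exact cv_mem_supported (hat_mem_supported _ _) _
  · exact resMat_mem hdC hdX h j

theorem det_resMatRest_mem (a : Fin 2) :
    (resMatRest d P Q m a).det ∈ supported F (varsBelow m a) := by
  apply det_mem_supported
  intro i j
  rw [resMatRest, Matrix.updateRow_apply]
  split_ifs with h
  · refine cv_mem_supported (supported_mono (up_mono ?_) (rest_mem_supported hdC hdX _ _)) _
    rintro ⟨b, k⟩ ⟨h1, h2⟩
    simp only at h1 h2
    subst h1
    exact ⟨h2.le, fun h => h2.ne (Prod.mk.inj h).2⟩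
  · exact resMat_mem hdC hdX h j

/-- The resultant has the expected order in the variable belonging to `f_a` exactly when the
coefficient `det (resMatQ a)` of the highest possible derivative does not vanish. -/
theorem ordIdx_resMat (a : Fin 2) :
    ordIdx a (resMat d P Q m).det = (m a.rev : WithBot ℕ) ↔ (resMatQ d P Q m a).det ≠ 0 := by
  have hA := mem_supported.1 (det_resMatQ_mem (P := P) (Q := Q) (m := m) hdC hdX a)
  have hB := mem_supported.1 (det_resMatRest_mem (P := P) (Q := Q) (m := m) hdC hdX a)
  have hnA : (a, m a.rev) ∉ (resMatQ d P Q m a).det.vars := fun h => (hA h).2 rfl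
  have hnB : (a, m a.rev) ∉ (resMatRest d P Q m a).det.vars := fun h => (hB h).2 rfl
  have hpd : pderiv (a, m a.rev) (resMat d P Q m).det = (resMatQ d P Q m a).det := by
    rw [det_resMat a, map_add, pderiv_mul, pderiv_X_self, pderiv_eq_zero_of_notMem_vars hnA,
      pderiv_eq_zero_of_notMem_vars hnB]
    ring
  have hvars : ∀ p ∈ (resMat d P Q m).det.vars, p.2 ≤ m p.1.rev := by
    have : (resMat d P Q m).det ∈ supported F {p : Fin 2 × ℕ | p.2 ≤ m p.1.rev} := by
      rw [det_resMat a]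
      refine add_mem (mul_mem (X_mem_supported.2 (le_refl (m a.rev))) (supported_mono (fun p hp => hp.1)
        (det_resMatQ_mem hdC hdX a))) (supported_mono (fun p hp => hp.1)
        (det_resMatRest_mem hdC hdX a))
    intro p hp
    exact mem_supported.1 this hp
  constructor
  · intro h hzero
    obtain ⟨p, hp, hp2⟩ := Finset.mem_image.1 (Finset.mem_of_max h)
    obtain ⟨hpv, hp1⟩ := Finset.mem_filter.1 hp
    have hp' : p = (a, m a.rev) := Prod.ext hp1 hp2
    rw [det_resMat a, hzero, mul_zero, zero_add, hp'] at hpv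
    exact hnB hpv
  · intro h
    have hmem : (a, m a.rev) ∈ (resMat d P Q m).det.vars := by
      by_contra hn
      rw [pderiv_eq_zero_of_notMem_vars hn] at hpd
      exact h hpd.symm
    apply le_antisymm
    · apply Finset.max_le
      intro k hk
      obtain ⟨p, hp, rfl⟩ := Finset.mem_image.1 hk
      obtain ⟨hpv, rfl⟩ := Finset.mem_filter.1 hp
      exact WithBot.coe_le_coe.2 (hvars p hpv)
    · exact Finset.le_max (Finset.mem_image.2 ⟨_, Finset.mem_filter.2 ⟨hmem, rfl⟩, rfl⟩)

theorem resultant_condition_iff : ((resMat d P Q m).det ≠ 0 ∧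
      ordIdx 0 (resMat d P Q m).det = (m 1 : WithBot ℕ) ∧
      ordIdx 1 (resMat d P Q m).det = (m 0 : WithBot ℕ)) ↔
    ∀ a, (resMatQ d P Q m a).det ≠ 0 := by
  have h0 := ordIdx_resMat (P := P) (Q := Q) (m := m) hdC hdX 0
  have h1 := ordIdx_resMat (P := P) (Q := Q) (m := m) hdC hdX 1
  change ordIdx 0 _ = (m 1 : WithBot ℕ) ↔ _ at h0
  change ordIdx 1 _ = (m 0 : WithBot ℕ) ↔ _ at h1
  rw [h0, h1, Fin.forall_fin_two]
  refine ⟨fun h => h.2, fun h => ⟨fun hR => ?_, h⟩⟩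
  have := h0.2 h.1
  rw [hR] at this
  simp [ordIdx] at this

end

end ResultantMatrix

/-! ### Kernel vectors of the resultant matrix -/

section KernelVectors

variable {F}
variable {H : Type*} [Field H] [Algebra F H] {ξ : Fin 2 → ℕ → H}

/-- Evaluation `F{x,y} → H` at `x_k, y_k = ξ 0 k, ξ 1 k`. -/
def theta (ξ : Fin 2 → ℕ → H) : MvPolynomial (Fin 2 × ℕ) F →ₐ[F] H := aeval fun p => ξ p.1 p.2

theorem theta_X (a : Fin 2) (k : ℕ) : theta ξ (X (a, k) : MvPolynomial (Fin 2 × ℕ) F) = ξ a k := by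
  simp [theta]

theorem theta_proj (f : MvPolynomial (Fin 3 × ℕ) F) : theta ξ (projXY F f) = evB ξ 0 f := by
  have : ((theta (F := F) ξ).comp (projXY F)).toRingHom = evB ξ 0 := by
    apply MvPolynomial.ringHom_ext
    · intro a
      simp only [AlgHom.toRingHom_eq_coe, RingHom.coe_coe, AlgHom.comp_apply, evB_C]
      rw [← algebraMap_eq, AlgHom.commutes, AlgHom.commutes]
    · intro p
      rcases fin3_cases p with ⟨a, k, rfl⟩ | ⟨k, rfl⟩
      · rw [evB_X]
        fin_cases a <;> simp [projXY, theta]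
      · rw [evB_U]
        simp [projXY]
  exact congrArg (fun g => g f) this

theorem grad_eq_sum {ω z : ℕ → H} {n : ℕ} (hz : ∀ l, n < l → z l = 0)
    (f : MvPolynomial (Fin 3 × ℕ) F) :
    grad ξ ω z f =
      ∑ l ∈ Finset.range (n + 1), evB ξ ω (pderiv ((2 : Fin 3), l) f) * z l := by
  classical
  induction f using MvPolynomial.induction_on with
  | C a => simp
  | add f g hf hg => simp only [grad_add, hf, hg, map_add, add_mul, Finset.sum_add_distrib]
  | mul_X f p hf =>
    have hX : grad ξ ω z (X p : MvPolynomial (Fin 3 × ℕ) F) = ∑ l ∈ Finset.range (n + 1),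
        evB ξ ω (pderiv ((2 : Fin 3), l) (X p : MvPolynomial (Fin 3 × ℕ) F)) * z l := by
      rcases fin3_cases p with ⟨a, k, rfl⟩ | ⟨k, rfl⟩
      · rw [grad_X, Finset.sum_eq_zero]
        intro l _
        rw [pderiv_X_of_ne, map_zero, zero_mul]
        intro h
        have := (Prod.mk.inj h).1
        fin_cases a <;> simp at this
      · rw [grad_U]
        by_cases hk : k < n + 1
        · rw [Finset.sum_eq_single_of_mem k (Finset.mem_range.2 hk)]
          · simp
          · intro l _ hl
            rw [pderiv_X_of_ne, map_zero, zero_mul]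
            exact fun h => hl (Prod.mk.inj h).2.symm
        · rw [hz k (by omega), Finset.sum_eq_zero]
          intro l hl
          rw [pderiv_X_of_ne, map_zero, zero_mul]
          intro h
          have := (Prod.mk.inj h).2
          have := Finset.mem_range.1 hl
          omega
    simp only [grad_mul, hf, hX, pderiv_mul, map_add, map_mul, smul_eq_mul, add_mul,
      Finset.sum_add_distrib, Finset.mul_sum]
    rw [add_comm]
    congr 1 <;> exact Finset.sum_congr rfl fun l _ => by ring

/-- The vector `(z_n, …, z_0, c)`. -/
def vec (n : ℕ) (z : ℕ → H) (c : H) (j : Fin (n + 2)) : H := if (j : ℕ) ≤ n then z (n - j) else c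

theorem sum_cv {z : ℕ → H} {c : H} {n : ℕ} (hz : ∀ l, n < l → z l = 0)
    (f : MvPolynomial (Fin 3 × ℕ) F) :
    ∑ j : Fin (n + 2), theta ξ (cv n f j) * vec n z c j = lam ξ z c f := by
  rw [lam, grad_eq_sum hz, Fin.sum_univ_castSucc]
  congr 1
  · rw [← Finset.sum_range_reflect, Finset.sum_range]
    apply Finset.sum_congr rfl
    intro j _
    have : (j : ℕ) ≤ n := by omega
    have h2 : n + 1 - 1 - (j : ℕ) = n - j := by omega
    simp only [cv, vec, Fin.val_castSucc, this, if_true, theta_proj, h2]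
  · simp [cv, vec, theta_proj]

theorem exists_vec (n : ℕ) (v : Fin (n + 2) → H) (hv : v ≠ 0) :
    ∃ (z : ℕ → H) (c : H), (∀ l, n < l → z l = 0) ∧ (c ≠ 0 ∨ ∃ l ≤ n, z l ≠ 0) ∧ vec n z c = v := by
  let z : ℕ → H := fun l => if l ≤ n then v ⟨n - l, by omega⟩ else 0
  have hvec : vec n z (v (Fin.last _)) = v := by
    ext j
    simp only [vec, z]
    split_ifs with h1 h2
    · congr 1
      ext
      simp only
      omega
    · omega
    · congr 1
      ext
      simp only [Fin.val_last]
      omega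
  refine ⟨z, v (Fin.last _), fun l hl => if_neg (by omega), ?_, hvec⟩
  by_contra hcon
  push Not at hcon
  apply hv
  rw [← hvec]
  ext j
  simp only [vec]
  split_ifs with h
  · exact hcon.2 _ (by omega)
  · exact hcon.1

variable {d : Derivation ℤ (MvPolynomial (Fin 3 × ℕ) F) (MvPolynomial (Fin 3 × ℕ) F)}
  {P Q : Fin 2 → MvPolynomial ℕ F} {m : Fin 2 → ℕ}

theorem resMat_mulVec {z : ℕ → H} {c : H} (hz : ∀ l, m 0 + m 1 < l → z l = 0)
    (i : Fin (m 0 + m 1 + 2)) : ((theta ξ).mapMatrix (resMat d P Q m)).mulVec (vec _ z c) i =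
      lam ξ z c (fd d P Q (rb m i) (rk m i)) := by
  rw [← sum_cv hz]
  rfl

theorem resMatQ_mulVec {z : ℕ → H} {c : H} (hz : ∀ l, m 0 + m 1 < l → z l = 0) (a : Fin 2)
    (i : Fin (m 0 + m 1 + 2)) : ((theta ξ).mapMatrix (resMatQ d P Q m a)).mulVec (vec _ z c) i =
      if i = top m a then lam ξ z c (hat (Q a)) else lam ξ z c (fd d P Q (rb m i) (rk m i)) := by
  split_ifs with h
  · rw [← sum_cv hz]
    simp [Matrix.mulVec, dotProduct, resMatQ, h]
  · rw [← sum_cv hz]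
    simp [Matrix.mulVec, dotProduct, resMatQ, h, resMat]

theorem exists_kernel_resMat (h0 : theta ξ (resMat d P Q m).det = 0) :
    ∃ (z : ℕ → H) (c : H), (∀ l, m 0 + m 1 < l → z l = 0) ∧ (c ≠ 0 ∨ ∃ l ≤ m 0 + m 1, z l ≠ 0) ∧
      ∀ b k, k ≤ m b.rev → lam ξ z c (fd d P Q b k) = 0 := by
  rw [AlgHom.map_det, ← Matrix.exists_mulVec_eq_zero_iff] at h0
  obtain ⟨v, hv, hMv⟩ := h0
  obtain ⟨z, c, hz, hne, rfl⟩ := exists_vec _ v hv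
  refine ⟨z, c, hz, hne, fun b k hk => ?_⟩
  obtain ⟨i, rfl, rfl⟩ := exists_row b hk
  rw [← resMat_mulVec hz, hMv]
  rfl

theorem exists_kernel_resMatQ {a : Fin 2} (h0 : theta ξ (resMatQ d P Q m a).det = 0) :
    ∃ (z : ℕ → H) (c : H), (∀ l, m 0 + m 1 < l → z l = 0) ∧ (c ≠ 0 ∨ ∃ l ≤ m 0 + m 1, z l ≠ 0) ∧
      lam ξ z c (hat (Q a)) = 0 ∧
      ∀ b k, k ≤ m b.rev → (b, k) ≠ (a, m a.rev) → lam ξ z c (fd d P Q b k) = 0 := by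
  rw [AlgHom.map_det, ← Matrix.exists_mulVec_eq_zero_iff] at h0
  obtain ⟨v, hv, hMv⟩ := h0
  obtain ⟨z, c, hz, hne, rfl⟩ := exists_vec _ v hv
  refine ⟨z, c, hz, hne, ?_, fun b k hk hbk => ?_⟩
  · have := congrFun hMv (top m a)
    rwa [resMatQ_mulVec hz, if_pos rfl] at this
  · obtain ⟨i, rfl, rfl⟩ := exists_row b hk
    have hi : i ≠ top m a := by
      rintro rfl
      exact hbk (by rw [rb_top, rk_top])
    have := congrFun hMv i
    rwa [resMatQ_mulVec hz, if_neg hi] at this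

theorem resMatQ_mulVec_eq {a : Fin 2} {z : ℕ → H} {c : H} (hz : ∀ l, m 0 + m 1 < l → z l = 0)
    (hrow : ∀ b k, k ≤ m b.rev → (b, k) ≠ (a, m a.rev) → lam ξ z c (fd d P Q b k) = 0) :
    ((theta ξ).mapMatrix (resMatQ d P Q m a)).mulVec (vec _ z c) =
      Pi.single (top m a) (lam ξ z c (hat (Q a))) := by
  ext i
  rw [resMatQ_mulVec hz, Pi.single_apply]
  split_ifs with h
  · rfl
  · exact hrow _ _ (rk_le i) fun h' => h (eq_top (Prod.mk.inj h').1 (Prod.mk.inj h').2)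

theorem eq_zero_of_resMatQ {a : Fin 2} (hA : theta ξ (resMatQ d P Q m a).det ≠ 0) {z : ℕ → H} {c : H}
    (hz : ∀ l, m 0 + m 1 < l → z l = 0)
    (hrow : ∀ b k, k ≤ m b.rev → (b, k) ≠ (a, m a.rev) → lam ξ z c (fd d P Q b k) = 0)
    (hQ : lam ξ z c (hat (Q a)) = 0) : c = 0 ∧ ∀ l, z l = 0 := by
  have h1 := resMatQ_mulVec_eq hz hrow
  rw [hQ, Pi.single_zero] at h1
  rw [AlgHom.map_det] at hA
  have h2 := Matrix.eq_zero_of_mulVec_eq_zero hA h1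
  constructor
  · have := congrFun h2 (Fin.last _)
    simpa [vec] using this
  · intro l
    by_cases hl : l ≤ m 0 + m 1
    · have := congrFun h2 ⟨m 0 + m 1 - l, by omega⟩
      have hs : m 0 + m 1 - (m 0 + m 1 - l) = l := by omega
      simpa [vec, hs] using this
    · exact hz l (by omega)

/-- Cramer's rule for the resultant matrix with row of `Q_a`: the quotient `z 0 / c` is a quotient of
values of polynomials in `F{x,y}`. -/
theorem exists_cramer (d : Derivation ℤ (MvPolynomial (Fin 3 × ℕ) F) (MvPolynomial (Fin 3 × ℕ) F))
    (P Q : Fin 2 → MvPolynomial ℕ F) (m : Fin 2 → ℕ) (a : Fin 2) (ξ : Fin 2 → ℕ → H) :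
    ∃ s t : MvPolynomial (Fin 2 × ℕ) F, ∀ (z : ℕ → H) (c : H), (∀ l, m 0 + m 1 < l → z l = 0) →
      (∀ b k, k ≤ m b.rev → (b, k) ≠ (a, m a.rev) → lam ξ z c (fd d P Q b k) = 0) →
      theta ξ (resMatQ d P Q m a).det * c = theta ξ s * lam ξ z c (hat (Q a)) ∧
      theta ξ (resMatQ d P Q m a).det * z 0 = theta ξ t * lam ξ z c (hat (Q a)) := by
  refine ⟨(resMatQ d P Q m a).adjugate (Fin.last _) (top m a),
    (resMatQ d P Q m a).adjugate ⟨m 0 + m 1, by omega⟩ (top m a), fun z c hz hrow => ?_⟩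
  have h1 := resMatQ_mulVec_eq hz hrow
  have h2 := congrArg (fun w => ((theta ξ).mapMatrix (resMatQ d P Q m a)).adjugate.mulVec w) h1
  simp only [Matrix.mulVec_mulVec, Matrix.adjugate_mul, Matrix.smul_mulVec, Matrix.one_mulVec,
    Matrix.mulVec_single] at h2
  rw [← AlgHom.map_det, ← AlgHom.map_adjugate] at h2
  constructor
  · have := congrFun h2 (Fin.last _)
    simpa [vec] using this
  · have := congrFun h2 ⟨m 0 + m 1, by omega⟩
    simpa [vec] using this

end KernelVectors

/-! ### First order deformations of rational function fields -/

section Extension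

variable {F}
variable {σ : Type*} {L : Type*} [Field L] [Algebra F L] [Algebra (MvPolynomial σ F) L]
  [IsScalarTower F (MvPolynomial σ F) L] [IsFractionRing (MvPolynomial σ F) L]

/-- The universal property of a rational function field for first order deformations: a ring
homomorphism `j` from `F(X)` to a field lifts to dual numbers, with prescribed lift on `F` and
prescribed infinitesimal parts at the variables. -/
theorem exists_lift_dual {K : Type*} [Field K] (j : L →+* K)
    (g : F →+* TrivSqZeroExt K K)
    (hg : ∀ a, (g a).fst = j (algebraMap F L a)) (v : σ → K) :
    ∃ κ : L →+* TrivSqZeroExt K K, (∀ x, (κ x).fst = j x) ∧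
      (∀ a, κ (algebraMap F L a) = g a) ∧
      ∀ i, κ (algebraMap (MvPolynomial σ F) L (X i)) =
        TrivSqZeroExt.inl (j (algebraMap (MvPolynomial σ F) L (X i))) +
          TrivSqZeroExt.inr (v i) := by
  let κ₀ : MvPolynomial σ F →+* TrivSqZeroExt K K := eval₂Hom g fun i =>
    TrivSqZeroExt.inl (j (algebraMap (MvPolynomial σ F) L (X i))) + TrivSqZeroExt.inr (v i)
  have hfst : ∀ p, (κ₀ p).fst = j (algebraMap (MvPolynomial σ F) L p) := by
    have : (TrivSqZeroExt.fstHom K K K).toRingHom.comp κ₀ =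
        j.comp (algebraMap (MvPolynomial σ F) L) := by
      apply MvPolynomial.ringHom_ext
      · intro a
        have h1 : algebraMap (MvPolynomial σ F) L (C a) = algebraMap F L a :=
          (IsScalarTower.algebraMap_apply F (MvPolynomial σ F) L a).symm
        simpa [κ₀, h1] using hg a
      · intro i
        simp [κ₀]
    intro p
    exact congrArg (fun h => h p) this
  have hunit : ∀ y : nonZeroDivisors (MvPolynomial σ F), IsUnit (κ₀ y) := by
    intro y
    rw [TrivSqZeroExt.isUnit_iff_isUnit_fst, hfst, isUnit_iff_ne_zero]
    intro h0
    have h1 := (map_eq_zero j).1 h0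
    exact nonZeroDivisors.coe_ne_zero y
      ((IsFractionRing.to_map_eq_zero_iff (R := MvPolynomial σ F) (K := L)).1 h1)
  let κ : L →+* TrivSqZeroExt K K := IsLocalization.lift hunit
  have hκ : ∀ p, κ (algebraMap (MvPolynomial σ F) L p) = κ₀ p := IsLocalization.lift_eq hunit
  refine ⟨κ, ?_, fun a => ?_, fun i => ?_⟩
  · have : (TrivSqZeroExt.fstHom K K K).toRingHom.comp κ = j := by
      apply IsLocalization.ringHom_ext (nonZeroDivisors (MvPolynomial σ F))
      refine RingHom.ext fun p => ?_
      simp only [RingHom.comp_apply]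
      rw [hκ]
      exact hfst p
    intro x
    exact congrArg (fun h => h x) this
  · rw [IsScalarTower.algebraMap_apply F (MvPolynomial σ F), hκ]
    simp [κ₀]
  · rw [hκ]
    simp [κ₀]

/-- A derivation of `F` extends to `F(X)` with arbitrary values at the variables. -/
theorem exists_derivation (δ : Derivation ℤ F F) (v : σ → L) :
    ∃ Δ : Derivation ℤ L L,
      (∀ a : F, Δ (algebraMap F L a) = algebraMap F _ (δ a)) ∧
      ∀ i, Δ (algebraMap (MvPolynomial σ F) L (X i)) = v i := by
  let g : F →+* TrivSqZeroExt L L :=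
    { toFun := fun a => TrivSqZeroExt.inl (algebraMap F L a) + TrivSqZeroExt.inr (algebraMap F L (δ a))
      map_one' := by ext <;> simp
      map_zero' := by ext <;> simp
      map_add' := by
        intro a b
        ext <;> simp only [TrivSqZeroExt.fst_add, TrivSqZeroExt.snd_add, TrivSqZeroExt.fst_inl,
          TrivSqZeroExt.fst_inr, TrivSqZeroExt.snd_inl, TrivSqZeroExt.snd_inr, map_add] <;> ring
      map_mul' := by
        intro a b
        ext <;> simp only [TrivSqZeroExt.fst_add, TrivSqZeroExt.snd_add, TrivSqZeroExt.fst_mul,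
          TrivSqZeroExt.snd_mul, TrivSqZeroExt.fst_inl, TrivSqZeroExt.fst_inr, TrivSqZeroExt.snd_inl,
          TrivSqZeroExt.snd_inr, map_add, map_mul, Derivation.leibniz, smul_eq_mul,
          MulOpposite.smul_eq_mul_unop, MulOpposite.unop_op] <;> ring }
  obtain ⟨κ, h1, h2, h3⟩ := exists_lift_dual (RingHom.id L) g (fun a => by simp [g]) v
  change ∀ x, (κ x).fst = x at h1
  let f : L →+ L :=
    { toFun := fun x => (κ x).snd
      map_zero' := by simp
      map_add' := by simp }
  refine ⟨Derivation.mk' f.toIntLinearMap ?_, fun a => ?_, fun i => ?_⟩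
  · intro x y
    change (κ (x * y)).snd = x • (κ y).snd + y • (κ x).snd
    rw [map_mul, TrivSqZeroExt.snd_mul, h1, h1]
    simp [mul_comm]
  · change (κ (algebraMap F L a)).snd = _
    rw [h2]
    simp only [g, RingHom.coe_mk, MonoidHom.coe_mk, OneHom.coe_mk, TrivSqZeroExt.snd_add,
      TrivSqZeroExt.snd_inl, TrivSqZeroExt.snd_inr, zero_add]
  · change (κ (algebraMap (MvPolynomial σ F) L (X i))).snd = _
    rw [h3]
    simp

/-- A field generated over `F(y_0, y_1, …)` by fewer than `N` elements does not contain all of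
`x_0, …, x_{N-1}`: some nontrivial combination of the `∂/∂x_i` kills it. -/
theorem exists_X_notMem_adjoin {L : Type*} [Field L] [Algebra F L]
    [Algebra (MvPolynomial (Fin 2 × ℕ) F) L] [IsScalarTower F (MvPolynomial (Fin 2 × ℕ) F) L]
    [IsFractionRing (MvPolynomial (Fin 2 × ℕ) F) L] {r N : ℕ} (hr : r < N)
    (g : Fin r → L) :
    ∃ i < N, algebraMap (MvPolynomial (Fin 2 × ℕ) F) L (X (0, i)) ∉
      IntermediateField.adjoin F (Set.range (fun k : ℕ =>
        algebraMap (MvPolynomial (Fin 2 × ℕ) F) L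
          (X (1, k))) ∪ Set.range g) := by
  classical
  choose pd h1 h2 using fun i : Fin N =>
    exists_derivation (F := F) (L := L) (0 : Derivation ℤ F F)
      (fun p : Fin 2 × ℕ => if p = (0, (i : ℕ)) then 1 else 0)
  let φ : (Fin N → L) →ₗ[L] (Fin r → L) := Matrix.mulVecLin (Matrix.of fun s i => pd i (g s))
  have hker : LinearMap.ker φ ≠ ⊥ := LinearMap.ker_ne_bot_of_finrank_lt (by simpa using hr)
  obtain ⟨c, hc, hc0⟩ := (Submodule.ne_bot_iff _).1 hker
  obtain ⟨i, hi⟩ := Function.ne_iff.1 hc0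
  refine ⟨i, i.2, fun hmem => hi ?_⟩
  have hkill : ∀ x ∈ IntermediateField.adjoin F (Set.range (fun k : ℕ =>
        algebraMap (MvPolynomial (Fin 2 × ℕ) F) L (X (1, k))) ∪ Set.range g),
      ∑ i, c i * pd i x = 0 := by
    intro x hx
    induction hx using IntermediateField.adjoin_induction with
    | mem x hx =>
      rcases hx with ⟨k, rfl⟩ | ⟨s, rfl⟩
      · simp [h2]
      · have : φ c s = 0 := by rw [LinearMap.mem_ker.1 hc]; rfl
        rw [← this]
        simp [φ, Matrix.mulVec, dotProduct, mul_comm]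
    | algebraMap a =>
      refine Finset.sum_eq_zero fun i _ => ?_
      rw [h1]
      simp
    | add x y hx hy ihx ihy => simp [mul_add, Finset.sum_add_distrib, ihx, ihy]
    | mul x y hx hy ihx ihy =>
      have : ∑ i, c i * pd i (x * y) = x * ∑ i, c i * pd i y + y * ∑ i, c i * pd i x := by
        rw [Finset.mul_sum, Finset.mul_sum, ← Finset.sum_add_distrib]
        refine Finset.sum_congr rfl fun i _ => ?_
        rw [Derivation.leibniz, smul_eq_mul, smul_eq_mul]
        ring
      rw [this, ihx, ihy, mul_zero, mul_zero, add_zero]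
    | inv x hx ihx =>
      have : ∑ i, c i * pd i x⁻¹ = -x⁻¹ ^ 2 * ∑ i, c i * pd i x := by
        rw [Finset.mul_sum]
        refine Finset.sum_congr rfl fun i _ => ?_
        rw [Derivation.leibniz_inv, smul_eq_mul]
        ring
      rw [this, ihx, mul_zero]
  have := hkill _ hmem
  simp only [h2, Prod.mk.injEq, true_and, Fin.val_inj, mul_ite, mul_one, mul_zero,
    Finset.sum_ite_eq, Finset.mem_univ, if_true] at this
  exact this

end Extension

/-! ### Kernel vectors satisfy a first order recursion -/

section Recursion

variable {F}
variable {H : Type*} [Field H] [Algebra F H] {ξ : Fin 2 → ℕ → H}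
variable {P Q : Fin 2 → MvPolynomial ℕ F} {m : Fin 2 → ℕ}
variable {δF : Derivation ℤ F F} {Δ : Derivation ℤ H H}
  {d : Derivation ℤ (MvPolynomial (Fin 3 × ℕ) F) (MvPolynomial (Fin 3 × ℕ) F)}

theorem aff_congr {H V : Type*} [Field H] [Algebra F H] [AddCommGroup V] [Module H V] {m : ℕ}
    {R : MvPolynomial ℕ F} {z z' : ℕ → V} {c : V} (hz : ∀ l ≤ m, z l = z' l) :
    aff (H := H) m R z c = aff (H := H) m R z' c := by
  simp only [aff]
  congr 1
  refine Finset.sum_congr rfl fun l hl => ?_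
  rw [hz l (by simpa [Nat.lt_succ_iff] using hl)]

/-- At a point of the curve where `det resMatQ 0` does not vanish, the kernel of the resultant
matrix is one-dimensional and stable under the shifted derivation, so its coordinates satisfy
`z (l + 1) = (Δ + μ) (z l)`, as if they were `h · Δ^l v` for a solution `v` of both equations. -/
theorem exists_solution (h : Fractions P Q m)
    (hΔ : ∀ a : F, Δ (algebraMap F H a) = algebraMap F H (δF a))
    (hdC : ∀ a : F, d (C a) = C (δF a)) (hdX : ∀ (i : Fin 3) (k : ℕ), d (X (i, k)) = X (i, k + 1))
    (hξ : ∀ a k, ξ a (k + 1) = Δ (ξ a k))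
    (hA : theta ξ (resMatQ d P Q m 0).det ≠ 0) (hR : theta ξ (resMat d P Q m).det = 0)
    (hlc : lc P Q m ξ 1 ≠ 0) :
    ∃ (z : ℕ → H) (c μ : H), (c ≠ 0 ∨ ∃ l, z l ≠ 0) ∧ (∀ l, z (l + 1) = Δ (z l) + μ * z l) ∧
      Δ c + μ * c = 0 ∧
      (∀ b, ξ b 0 * aff (H := H) (m b) (Q b) z c = aff (H := H) (m b) (P b) z c) ∧
      aff (H := H) (m 0) (Q 0) z c ≠ 0 := by
  obtain ⟨z, c, hz, hne, hrow⟩ := exists_kernel_resMat hR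
  have hq : lam ξ z c (hat (Q 0)) ≠ 0 := by
    intro hq
    obtain ⟨h1, h2⟩ := eq_zero_of_resMatQ hA hz (fun b k hk _ => hrow b k hk) hq
    rcases hne with hne | ⟨l, -, hne⟩
    · exact hne h1
    · exact hne (h2 l)
  let T : H →+ H := AddMonoidHomClass.toAddMonoidHom Δ
  have hT : ∀ (x y : H), T (x • y) = Δ x • y + x • T y := by
    intro x y
    change Δ (x * y) = Δ x * y + x * Δ y
    rw [Derivation.leibniz, smul_eq_mul, smul_eq_mul]
    ring
  let zs : ℕ → H := fun l => z (l + 1) - Δ (z l)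
  let β : H := lam ξ zs (-Δ c) (fd d P Q 1 (m 0))
  let zt : ℕ → H := fun l => if l < m 0 + m 1 then zs l else
    if l = m 0 + m 1 then zs l - β / lc P Q m ξ 1 else 0
  have hlt : ∀ l < m 0 + m 1, zt l = zs l := fun l hl => if_pos hl
  have htop : zt (m 0 + m 1) = zs (m 0 + m 1) - β / lc P Q m ξ 1 := by simp [zt]
  have hzt : ∀ l, m 0 + m 1 < l → zt l = 0 := by
    intro l hl
    simp only [zt]
    rw [if_neg (by omega), if_neg (by omega)]
  have hrow' : ∀ b k, k ≤ m b.rev → (b, k) ≠ (0, m (0 : Fin 2).rev) →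
      lam ξ zt (-Δ c) (fd d P Q b k) = 0 := by
    have hlow : ∀ b k, k < m b.rev → m b + k < m 0 + m 1 →
        lam ξ zt (-Δ c) (fd d P Q b k) = 0 := by
      intro b k hk hn
      rw [lam_fd_congr (z' := zs) h hΔ hdC hdX hξ T hT b k (fun l hl => hlt l (by omega)),
        hlt _ hn, sub_self, smul_zero, add_zero]
      have h1 := lam_d (z := z) (c := c) hΔ hdC hdX hξ T hT (fd d P Q b k)
      rw [← fd_succ, hrow b (k + 1) hk, hrow b k hk.le, map_zero, zero_add] at h1
      exact h1.symm
    intro b k hk hbk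
    fin_cases b
    · have hk' : k < m 1 := lt_of_le_of_ne hk (fun h' => hbk (by rw [h']; rfl))
      exact hlow 0 k hk' (by omega)
    · rcases lt_or_eq_of_le hk with hk | hk
      · exact hlow 1 k hk (by have : k < m 0 := hk; change m 1 + k < _; omega)
      · have hk' : k = m 0 := hk
        subst hk'
        have hn : m 1 + m 0 = m 0 + m 1 := add_comm _ _
        change lam ξ zt (-Δ c) (fd d P Q 1 (m 0)) = 0
        rw [lam_fd_congr (z' := zs) h hΔ hdC hdX hξ T hT 1 (m 0)
          (fun l hl => hlt l (by omega)), hn, htop]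
        change β + _ = 0
        rw [sub_sub_cancel_left, smul_eq_mul]
        field_simp
        ring
  set μ : H := lam ξ zt (-Δ c) (hat (Q 0)) / lam ξ z c (hat (Q 0)) with hμ
  obtain ⟨hc', hz'⟩ := eq_zero_of_resMatQ hA (z := fun l => zt l - μ • z l) (c := -Δ c - μ • c)
    (fun l hl => by simp [hzt l hl, hz l hl])
    (fun b k hk hbk => by rw [lam_sub_smul, hrow' b k hk hbk, hrow b k hk, smul_zero, sub_zero])
    (by rw [lam_sub_smul, smul_eq_mul, hμ, div_mul_cancel₀ _ hq, sub_self])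
  let Z : ℕ → H := fun l => (fun w => Δ w + μ * w)^[l] (z 0)
  have hZs : ∀ l, Z (l + 1) = Δ (Z l) + μ * Z l := fun l => Function.iterate_succ_apply' _ _ _
  have hZ : ∀ l ≤ m 0 + m 1, Z l = z l := by
    intro l
    induction l with
    | zero => intro _; rfl
    | succ l ih =>
      intro hl
      rw [hZs, ih (by omega)]
      have h1 := hz' l
      rw [hlt l (by omega), smul_eq_mul] at h1
      simp only [zs] at h1
      linear_combination -h1
  have hm : ∀ b, m b ≤ m 0 + m 1 := by
    intro b; fin_cases b <;> simp
  have haff : ∀ b (R : MvPolynomial ℕ F), aff (H := H) (m b) R Z c = aff (H := H) (m b) R z c :=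
    fun b R => aff_congr fun l hl => hZ l (hl.trans (hm b))
  refine ⟨Z, c, μ, ?_, hZs, ?_, fun b => ?_, ?_⟩
  · rcases hne with hne | ⟨l, hl, hne⟩
    · exact Or.inl hne
    · exact Or.inr ⟨l, by rwa [hZ l hl]⟩
  · rw [smul_eq_mul] at hc'
    linear_combination -hc'
  · have h1 := hrow b 0 (Nat.zero_le _)
    rw [lam_fd_zero h, smul_eq_mul] at h1
    rw [haff, haff]
    exact sub_eq_zero.1 h1
  · rw [haff, ← lam_hat (ξ := ξ) (h.degQ 0) (h.ordQ 0)]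
    exact hq

/-- A solution of the recursion may be rescaled by a nonzero factor. -/
theorem rescale {z : ℕ → H} {c μ : H} (hz : ∀ l, z (l + 1) = Δ (z l) + μ * z l)
    (hc : Δ c + μ * c = 0) {g : H} (hg : g ≠ 0) :
    (∀ l, g * z (l + 1) = Δ (g * z l) + (μ - Δ g / g) * (g * z l)) ∧
      Δ (g * c) + (μ - Δ g / g) * (g * c) = 0 := by
  constructor
  · intro l
    rw [hz, Derivation.leibniz, smul_eq_mul, smul_eq_mul]
    field_simp
    ring
  · rw [Derivation.leibniz, smul_eq_mul, smul_eq_mul]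
    field_simp
    linear_combination g * hc

theorem aff_mul (n : ℕ) (R : MvPolynomial ℕ F) (g : H) (z : ℕ → H) (c : H) :
    aff (H := H) n R (fun l => g * z l) (g * c) = g * aff (H := H) n R z c := by
  simp only [aff, smul_eq_mul, mul_add, Finset.mul_sum]
  congr 1
  · exact Finset.sum_congr rfl fun l _ => by ring
  · ring

end Recursion

/-! ### Solutions at a generic point -/

section GenericPoint

variable {F}
variable {L : Type*} [Field L] [Algebra F L]

theorem mem_of_relation {M : IntermediateField F L} {j : ℕ} {a z : ℕ → L} {b : L}
    (ha : ∀ l ≤ j, a l ∈ M) (hb : b ∈ M) (hz : ∀ l < j, z l ∈ M) (haj : a j ≠ 0)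
    (hrel : ∑ l ∈ Finset.range (j + 1), a l * z l + b = 0) : z j ∈ M := by
  have h1 : z j = -(∑ l ∈ Finset.range j, a l * z l + b) / a j := by
    rw [Finset.sum_range_succ] at hrel
    rw [eq_div_iff haj]
    linear_combination hrel
  rw [h1]
  refine M.div_mem (M.neg_mem (M.add_mem (M.sum_mem fun l hl => ?_) hb)) (ha j le_rfl)
  have hl : l < j := Finset.mem_range.1 hl
  exact M.mul_mem (ha l hl.le) (hz l hl)

theorem aff_mem {M : IntermediateField F L} {n : ℕ} {R : MvPolynomial ℕ F} {z : ℕ → L} {c : L}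
    (hz : ∀ l, z l ∈ M) (hc : c ∈ M) : aff (H := L) n R z c ∈ M := by
  refine M.add_mem (M.sum_mem fun l _ => ?_) ?_
  · exact M.mul_mem (M.algebraMap_mem _) (hz l)
  · exact M.mul_mem (M.algebraMap_mem _) hc

variable [Algebra (MvPolynomial (Fin 2 × ℕ) F) L]
  [IsScalarTower F (MvPolynomial (Fin 2 × ℕ) F) L]
variable {P Q : Fin 2 → MvPolynomial ℕ F} {m : Fin 2 → ℕ} {ξ : Fin 2 → ℕ → L}
variable {δF : Derivation ℤ F F} {Δ : Derivation ℤ L L}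
  {d : Derivation ℤ (MvPolynomial (Fin 3 × ℕ) F) (MvPolynomial (Fin 3 × ℕ) F)}

theorem theta_eq_algebraMap {S : Set (Fin 2 × ℕ)}
    (hξ : ∀ p ∈ S, ξ p.1 p.2 = algebraMap (MvPolynomial (Fin 2 × ℕ) F) L (X p))
    {f : MvPolynomial (Fin 2 × ℕ) F} (hf : f ∈ supported F S) :
    theta ξ f = algebraMap (MvPolynomial (Fin 2 × ℕ) F) L f := by
  have h1 : Set.EqOn (theta ξ) (IsScalarTower.toAlgHom F (MvPolynomial (Fin 2 × ℕ) F) L)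
      (Algebra.adjoin F ((X : _ → MvPolynomial (Fin 2 × ℕ) F) '' S) :
        Set (MvPolynomial (Fin 2 × ℕ) F)) := by
    refine AlgHom.eqOn_adjoin_iff.2 ?_
    rintro _ ⟨p, hp, rfl⟩
    have h2 := theta_X (F := F) (ξ := ξ) p.1 p.2
    rw [h2, hξ p hp]
    rfl
  exact h1 hf

/-- The generic solution of `x_N A + B = 0` with `x_0, …, x_{N-1}, y_0, y_1, …` independent: the
derivation of `F(x, y)` sends `x_{N-1}` to `-B/A`. -/
theorem exists_generic_point (L : Type*) [Field L] [Algebra F L]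
    [Algebra (MvPolynomial (Fin 2 × ℕ) F) L] [IsScalarTower F (MvPolynomial (Fin 2 × ℕ) F) L]
    [IsFractionRing (MvPolynomial (Fin 2 × ℕ) F) L] (δF : Derivation ℤ F F) {m : Fin 2 → ℕ}
    {A B : MvPolynomial (Fin 2 × ℕ) F} (hA : A ∈ supported F (varsBelow m 0))
    (hB : B ∈ supported F (varsBelow m 0)) (hA0 : A ≠ 0) :
    ∃ (Δ : Derivation ℤ L L) (ξ : Fin 2 → ℕ → L),
      (∀ a : F, Δ (algebraMap F L a) = algebraMap F L (δF a)) ∧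
      (∀ a k, ξ a (k + 1) = Δ (ξ a k)) ∧
      (∀ k, ξ 1 k = algebraMap (MvPolynomial (Fin 2 × ℕ) F) L (X (1, k))) ∧
      (∀ k < m 1, ξ 0 k = algebraMap (MvPolynomial (Fin 2 × ℕ) F) L (X (0, k))) ∧
      theta ξ A ≠ 0 ∧ theta ξ (X (0, m 1) * A + B) = 0 := by
  let ι : MvPolynomial (Fin 2 × ℕ) F → L := algebraMap (MvPolynomial (Fin 2 × ℕ) F) L
  have hι : ι A ≠ 0 := fun h => hA0 ((IsFractionRing.to_map_eq_zero_iff (K := L)).1 h)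
  let ρ : L := -ι B / ι A
  obtain ⟨Δ, hΔ, hX⟩ := exists_derivation (F := F) (L := L) δF (fun p : Fin 2 × ℕ =>
    if p.1 = 1 then ι (X (1, p.2 + 1)) else if p.2 + 1 < m 1 then ι (X (0, p.2 + 1)) else ρ)
  let ξ : Fin 2 → ℕ → L := fun a k =>
    Δ^[k] (if a = 0 then (if m 1 = 0 then ρ else ι (X (0, 0))) else ι (X (1, 0)))
  have hξ : ∀ a k, ξ a (k + 1) = Δ (ξ a k) := fun a k => Function.iterate_succ_apply' _ _ _
  have hy : ∀ k, ξ 1 k = ι (X (1, k)) := by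
    intro k
    induction k with
    | zero => rfl
    | succ k ih => rw [hξ, ih, hX]; rfl
  have hx : ∀ k < m 1, ξ 0 k = ι (X (0, k)) := by
    intro k
    induction k with
    | zero => intro h0; simp [ξ, h0.ne']
    | succ k ih =>
      intro hk
      rw [hξ, ih (by omega), hX]
      simp [hk]
  have htop : ξ 0 (m 1) = ρ := by
    rcases Nat.eq_zero_or_pos (m 1) with h0 | h0
    · simp [ξ, h0]
    · obtain ⟨k, hk⟩ : ∃ k, m 1 = k + 1 := ⟨m 1 - 1, by omega⟩
      rw [hk, hξ, hx k (by omega), hX]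
      simp [hk]
  have hS : ∀ p ∈ varsBelow m 0, ξ p.1 p.2 = algebraMap (MvPolynomial (Fin 2 × ℕ) F) L (X p) := by
    rintro ⟨a, k⟩ ⟨h1, h2⟩
    fin_cases a
    · exact hx k (lt_of_le_of_ne h1 fun h' => h2 (Prod.ext rfl h'))
    · exact hy k
  refine ⟨Δ, ξ, hΔ, hξ, hy, hx, ?_, ?_⟩
  · rw [theta_eq_algebraMap hS hA]
    exact hι
  · rw [map_add, map_mul, theta_X, theta_eq_algebraMap hS hA, theta_eq_algebraMap hS hB, htop]
    change -ι B / ι A * ι A + ι B = 0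
    rw [div_mul_cancel₀ _ hι, neg_add_cancel]

variable [IsFractionRing (MvPolynomial (Fin 2 × ℕ) F) L]

/-- A differential field over `F(y_0, y_1, …)` generated by fewer than `m₂` elements cannot contain
a solution `z`, since it would contain `x_0, …, x_{m₂-1}`. -/
theorem no_small_solution (hΔ : ∀ a : F, Δ (algebraMap F L a) = algebraMap F L (δF a))
    (hξ : ∀ a k, ξ a (k + 1) = Δ (ξ a k))
    (hy : ∀ k, ξ 1 k = algebraMap (MvPolynomial (Fin 2 × ℕ) F) L (X (1, k)))
    (hx : ∀ k < m 1, ξ 0 k = algebraMap (MvPolynomial (Fin 2 × ℕ) F) L (X (0, k)))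
    {r : ℕ} (hr : r < m 1) (g : Fin r → L) {M : IntermediateField F L}
    (hM : M = IntermediateField.adjoin F (Set.range (fun k : ℕ =>
      algebraMap (MvPolynomial (Fin 2 × ℕ) F) L (X (1, k))) ∪ Set.range g))
    (hg : ∀ s, Δ (g s) ∈ M) {z : ℕ → L} {c μ : L} (hμ : μ ∈ M) (hz0 : z 0 ∈ M) (hc : c ∈ M)
    (hz : ∀ l, z (l + 1) = Δ (z l) + μ * z l)
    (hsol : ξ 0 0 * aff (H := L) (m 0) (Q 0) z c = aff (H := L) (m 0) (P 0) z c)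
    (hne : aff (H := L) (m 0) (Q 0) z c ≠ 0) : False := by
  have hstab : ∀ w ∈ M, Δ w ∈ M := by
    intro w hw
    rw [hM] at hw
    have hle : ∀ {w}, w ∈ IntermediateField.adjoin F (Set.range (fun k : ℕ =>
      algebraMap (MvPolynomial (Fin 2 × ℕ) F) L (X (1, k))) ∪ Set.range g) → w ∈ M := by
      intro w hw
      rwa [hM]
    induction hw using IntermediateField.adjoin_induction with
    | mem w hw =>
      rcases hw with ⟨k, rfl⟩ | ⟨s, rfl⟩
      · change Δ (algebraMap (MvPolynomial (Fin 2 × ℕ) F) L (X (1, k))) ∈ M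
        rw [← hy, ← hξ, hy]
        exact hle (IntermediateField.subset_adjoin _ _ (Or.inl ⟨k + 1, rfl⟩))
      · exact hg s
    | algebraMap a => rw [hΔ]; exact M.algebraMap_mem _
    | add v w hv hw ihv ihw => rw [map_add]; exact M.add_mem ihv ihw
    | mul v w hv hw ihv ihw =>
      rw [Derivation.leibniz]
      exact M.add_mem (M.mul_mem (hle hv) ihw) (M.mul_mem (hle hw) ihv)
    | inv v hv ihv =>
      rw [Derivation.leibniz_inv]
      exact M.mul_mem (M.neg_mem (pow_mem (M.inv_mem (hle hv)) 2)) ihv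
  have hzM : ∀ l, z l ∈ M := by
    intro l
    induction l with
    | zero => exact hz0
    | succ l ih => rw [hz]; exact M.add_mem (hstab _ ih) (M.mul_mem hμ ih)
  have h0 : ξ 0 0 ∈ M := by
    rw [eq_div_of_mul_eq hne hsol]
    exact M.div_mem (aff_mem hzM hc) (aff_mem hzM hc)
  have hxM : ∀ k, ξ 0 k ∈ M := by
    intro k
    induction k with
    | zero => exact h0
    | succ k ih => rw [hξ]; exact hstab _ ih
  obtain ⟨i, hi, hi'⟩ := exists_X_notMem_adjoin (F := F) (L := L) hr g
  apply hi'
  rw [← hM, ← hx i hi]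
  exact hxM i

/-- The homogeneous part of the two equations has no common solution at the generic point. -/
theorem no_homogeneous_solution (hΔ : ∀ a : F, Δ (algebraMap F L a) = algebraMap F L (δF a))
    (hξ : ∀ a k, ξ a (k + 1) = Δ (ξ a k))
    (hy : ∀ k, ξ 1 k = algebraMap (MvPolynomial (Fin 2 × ℕ) F) L (X (1, k)))
    (hx : ∀ k < m 1, ξ 0 k = algebraMap (MvPolynomial (Fin 2 × ℕ) F) L (X (0, k)))
    (hlc : lc P Q m ξ 1 ≠ 0) {z : ℕ → L} {μ : L} (hz0 : z 0 = 1)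
    (hz : ∀ l, z (l + 1) = Δ (z l) + μ * z l)
    (hsol : ∀ b, ξ b 0 * aff (H := L) (m b) (Q b) z 0 = aff (H := L) (m b) (P b) z 0)
    (hne : aff (H := L) (m 0) (Q 0) z 0 ≠ 0) : False := by
  have hμ : μ = z 1 := by rw [hz 0, hz0, Derivation.map_one_eq_zero, zero_add, mul_one]
  let a : ℕ → L := fun l => ξ 1 0 * algebraMap F L (coeff (Finsupp.single l 1) (Q 1)) -
    algebraMap F L (coeff (Finsupp.single l 1) (P 1))
  have hrel : ∑ l ∈ Finset.range (m 1 + 1), a l * z l + 0 = 0 := by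
    have h1 := hsol 1
    simp only [aff, smul_eq_mul, mul_zero, add_zero, Finset.mul_sum] at h1
    rw [add_zero, ← sub_eq_zero.2 h1, ← Finset.sum_sub_distrib]
    exact Finset.sum_congr rfl fun l _ => by ring
  rcases Nat.eq_zero_or_pos (m 1) with h0 | h0
  · rw [h0] at hrel
    simp only [zero_add, Finset.sum_range_one, hz0, mul_one, add_zero] at hrel
    apply hlc
    rw [lc, h0]
    exact hrel
  let g : Fin (m 1 - 1) → L := fun s => z (s + 1)
  let M := IntermediateField.adjoin F (Set.range (fun k : ℕ =>
      algebraMap (MvPolynomial (Fin 2 × ℕ) F) L (X (1, k))) ∪ Set.range g)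
  have hyM : ξ 1 0 ∈ M := by
    rw [hy]
    exact IntermediateField.subset_adjoin _ _ (Or.inl ⟨0, rfl⟩)
  have hlow : ∀ l < m 1, z l ∈ M := by
    intro l hl
    rcases l with _ | l
    · rw [hz0]; exact M.one_mem
    · exact IntermediateField.subset_adjoin _ _ (Or.inr ⟨⟨l, by omega⟩, rfl⟩)
  have htop : z (m 1) ∈ M := mem_of_relation (a := a)
    (fun l _ => M.sub_mem (M.mul_mem hyM (M.algebraMap_mem _)) (M.algebraMap_mem _))
    M.zero_mem hlow hlc hrel
  have hle : ∀ l ≤ m 1, z l ∈ M := by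
    intro l hl
    rcases lt_or_eq_of_le hl with hl | rfl
    · exact hlow l hl
    · exact htop
  have hμM : μ ∈ M := by rw [hμ]; exact hle 1 h0
  refine no_small_solution hΔ hξ hy hx (by omega) g (M := M) rfl (fun s => ?_) hμM (hle 0 (by omega))
    M.zero_mem hz (hsol 0) hne
  have h1 : Δ (g s) = z (s + 1 + 1) - μ * z (s + 1) := by rw [hz (s + 1)]; simp [g]
  rw [h1]
  exact M.sub_mem (hle _ (by omega)) (M.mul_mem hμM (hle _ (by omega)))

/-- At a solution of both equations where `Q₁` does not vanish, `Q₂` does not vanish either: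
a solution of `P₂ = Q₂ = 0` cannot solve the first equation at the generic point. -/
theorem aff_ne_zero_of_solution (h : Fractions P Q m)
    (hΔ : ∀ a : F, Δ (algebraMap F L a) = algebraMap F L (δF a))
    (hξ : ∀ a k, ξ a (k + 1) = Δ (ξ a k))
    (hy : ∀ k, ξ 1 k = algebraMap (MvPolynomial (Fin 2 × ℕ) F) L (X (1, k)))
    (hx : ∀ k < m 1, ξ 0 k = algebraMap (MvPolynomial (Fin 2 × ℕ) F) L (X (0, k)))
    {z : ℕ → L} (hz : ∀ l, z (l + 1) = Δ (z l))
    (hsol : ∀ b, ξ b 0 * aff (H := L) (m b) (Q b) z 1 = aff (H := L) (m b) (P b) z 1)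
    (hne : aff (H := L) (m 0) (Q 0) z 1 ≠ 0) : aff (H := L) (m 1) (Q 1) z 1 ≠ 0 := by
  intro hQ
  have hP := hsol 1
  rw [hQ, mul_zero] at hP
  set q := coeff (Finsupp.single (m 1) 1) (Q 1) with hq
  set p := coeff (Finsupp.single (m 1) 1) (P 1) with hp
  let r : ℕ → F := fun l => q * coeff (Finsupp.single l 1) (P 1) - p * coeff (Finsupp.single l 1) (Q 1)
  let rc : F := q * coeff 0 (P 1) - p * coeff 0 (Q 1)
  have hrel : ∑ l ∈ Finset.range (m 1 + 1), algebraMap F L (r l) * z l + algebraMap F L rc = 0 := by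
    simp only [aff, smul_eq_mul, mul_one] at hP hQ
    have h1 : ∑ l ∈ Finset.range (m 1 + 1), algebraMap F L (r l) * z l =
        algebraMap F L q * ∑ l ∈ Finset.range (m 1 + 1),
          algebraMap F L (coeff (Finsupp.single l 1) (P 1)) * z l -
        algebraMap F L p * ∑ l ∈ Finset.range (m 1 + 1),
          algebraMap F L (coeff (Finsupp.single l 1) (Q 1)) * z l := by
      rw [Finset.mul_sum, Finset.mul_sum, ← Finset.sum_sub_distrib]
      refine Finset.sum_congr rfl fun l _ => ?_
      simp only [r, map_sub, map_mul]
      ring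
    rw [h1]
    simp only [rc, map_sub, map_mul]
    linear_combination -(algebraMap F L q) * hP - algebraMap F L p * hQ
  have hform : cross P Q m 1 = ∑ l ∈ Finset.range (m 1 + 1), C (r l) * X l + C rc := by
    have e1 := affine_form (h.degP 1) (h.ordP 1)
    have e2 := affine_form (h.degQ 1) (h.ordQ 1)
    have h1 : ∑ l ∈ Finset.range (m 1 + 1), C (r l) * (X l : MvPolynomial ℕ F) =
        C q * ∑ l ∈ Finset.range (m 1 + 1), C (coeff (Finsupp.single l 1) (P 1)) * X l -
        C p * ∑ l ∈ Finset.range (m 1 + 1), C (coeff (Finsupp.single l 1) (Q 1)) * X l := by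
      rw [Finset.mul_sum, Finset.mul_sum, ← Finset.sum_sub_distrib]
      refine Finset.sum_congr rfl fun l _ => ?_
      simp only [r, map_sub, map_mul]
      ring
    rw [h1, cross]
    simp only [rc, map_sub, map_mul]
    linear_combination C q * e1 - C p * e2
  have hex : ∃ l ≤ m 1, r l ≠ 0 := by
    by_contra hcon
    push Not at hcon
    have hz' : ∀ l ∈ Finset.range (m 1 + 1), r l = 0 := fun l hl =>
      hcon l (by simpa [Nat.lt_succ_iff] using hl)
    rw [Finset.sum_eq_zero fun l hl => by rw [hz' l hl, map_zero, zero_mul], zero_add,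
      map_eq_zero] at hrel
    apply h.cross_ne_zero 1
    rw [hform, hrel, Finset.sum_eq_zero fun l hl => by rw [hz' l hl, map_zero, zero_mul], map_zero,
      add_zero]
  classical
  obtain ⟨l₀, hl₀, hrl₀⟩ := hex
  set j := Nat.findGreatest (fun l => r l ≠ 0) (m 1) with hj
  have hrj : r j ≠ 0 := Nat.findGreatest_spec (P := fun l => r l ≠ 0) hl₀ hrl₀
  have hjm : j < m 1 := by
    refine lt_of_le_of_ne (Nat.findGreatest_le _) fun h' => hrj ?_
    rw [h']
    simp only [r, ← hq, ← hp]
    ring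
  have hgt : ∀ l, j < l → l ≤ m 1 → r l = 0 := fun l h1 h2 =>
    not_not.1 (Nat.findGreatest_is_greatest (P := fun l => r l ≠ 0) h1 h2)
  have hrel' : ∑ l ∈ Finset.range (j + 1), algebraMap F L (r l) * z l + algebraMap F L rc = 0 := by
    rw [← hrel]
    congr 1
    refine Finset.sum_subset (Finset.range_mono (by omega)) fun l h1 h2 => ?_
    simp only [Finset.mem_range, Nat.lt_succ_iff, not_le] at h1 h2
    rw [hgt l h2 h1, map_zero, zero_mul]
  let g : Fin j → L := fun s => z s
  let M := IntermediateField.adjoin F (Set.range (fun k : ℕ =>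
      algebraMap (MvPolynomial (Fin 2 × ℕ) F) L (X (1, k))) ∪ Set.range g)
  have hlow : ∀ l < j, z l ∈ M := fun l hl =>
    IntermediateField.subset_adjoin _ _ (Or.inr ⟨⟨l, hl⟩, rfl⟩)
  have htop : z j ∈ M := mem_of_relation (fun l _ => M.algebraMap_mem _) (M.algebraMap_mem _) hlow
    (by rwa [Ne, map_eq_zero]) hrel'
  have hle : ∀ l ≤ j, z l ∈ M := by
    intro l hl
    rcases lt_or_eq_of_le hl with hl | rfl
    · exact hlow l hl
    · exact htop
  refine no_small_solution (μ := 0) hΔ hξ hy hx hjm g (M := M) rfl (fun s => ?_) M.zero_mem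
    (hle 0 (by omega)) M.one_mem (fun l => by rw [hz, zero_mul, add_zero]) (hsol 0) hne
  change Δ (z s) ∈ M
  rw [← hz]
  exact hle _ (by omega)

end GenericPoint

/-! ### Specialization of `η` -/

section Specialization

variable {F}
variable {L : Type*} [Field L] [Algebra F L]
variable {P Q : Fin 2 → MvPolynomial ℕ F} {m : Fin 2 → ℕ} {ξ : Fin 2 → ℕ → L} {z : ℕ → L}
variable {δF : Derivation ℤ F F} {D : Derivation ℤ E E} {Δ : Derivation ℤ L L} {u : E}
  {d : Derivation ℤ (MvPolynomial (Fin 3 × ℕ) F) (MvPolynomial (Fin 3 × ℕ) F)}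

/-- `e ∈ E` specializes to `w ∈ L` under `u_k ↦ z_k`: both are values of one fraction of differential
polynomials in `u`, the denominator of which does not vanish at `z`. The fractions are taken in
`F{x,y,u}`, with `x` and `y` evaluated at `0`, where the derivation `d` lives. -/
def SpecializesTo (F : Type*) {E L : Type*} [Field F] [Field E] [Algebra F E] [Field L] [Algebra F L]
    (D : Derivation ℤ E E) (u : E) (z : ℕ → L) (e : E) (w : L) : Prop :=
  ∃ a b : MvPolynomial (Fin 3 × ℕ) F, evB 0 z b ≠ 0 ∧
    e * evB 0 (fun k => (⇑D)^[k] u) b = evB 0 (fun k => (⇑D)^[k] u) a ∧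
    w * evB 0 z b = evB 0 z a

theorem evB_zero_eq (ω : ℕ → L) (f : MvPolynomial (Fin 3 × ℕ) F) :
    evB 0 ω f = aeval ω (aeval (fun p : Fin 3 × ℕ =>
      if (p.1 : ℕ) < 2 then (0 : MvPolynomial ℕ F) else X p.2) f) := by
  have : evB (F := F) 0 ω = ((aeval ω : MvPolynomial ℕ F →ₐ[F] L).comp
      (aeval (fun p : Fin 3 × ℕ =>
        if (p.1 : ℕ) < 2 then (0 : MvPolynomial ℕ F) else X p.2))).toRingHom := by
    apply MvPolynomial.ringHom_ext
    · intro a; simp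
    · intro p
      rcases fin3_cases p with ⟨a, k, rfl⟩ | ⟨k, rfl⟩
      · have ha : ((a.castSucc : Fin 3) : ℕ) < 2 := a.isLt
        rw [evB_X]
        simp only [AlgHom.toRingHom_eq_coe, RingHom.coe_coe, AlgHom.comp_apply, aeval_X, if_pos ha,
          map_zero, Pi.zero_apply]
      · rw [evB_U]; simp
  rw [this]
  rfl

/-- A differential polynomial vanishing at the transcendental element `u` vanishes everywhere. -/
theorem evB_eq_zero_of_diffTrans (hu : DiffTrans F D u) {f : MvPolynomial (Fin 3 × ℕ) F}
    (hf : evB 0 (fun k => (⇑D)^[k] u) f = 0) : evB 0 z f = 0 := by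
  rw [evB_zero_eq] at hf ⊢
  rw [hu (hf.trans (map_zero _).symm), map_zero]

theorem SpecializesTo.ne_zero (hu : DiffTrans F D u) {e : E} {w : L}
    (h : SpecializesTo F D u z e w) (hw : w ≠ 0) : e ≠ 0 := by
  obtain ⟨a, b, hb, h1, h2⟩ := h
  rintro rfl
  rw [zero_mul] at h1
  rw [evB_eq_zero_of_diffTrans hu h1.symm] at h2
  exact (mul_ne_zero hw hb) h2

theorem SpecializesTo.const (a : F) :
    SpecializesTo F D u z (algebraMap F E a) (algebraMap F L a) :=
  ⟨C a, 1, by simp, by simp, by simp⟩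

theorem SpecializesTo.add {e e' : E} {w w' : L} (h : SpecializesTo F D u z e w)
    (h' : SpecializesTo F D u z e' w') : SpecializesTo F D u z (e + e') (w + w') := by
  obtain ⟨a, b, hb, h1, h2⟩ := h
  obtain ⟨a', b', hb', h1', h2'⟩ := h'
  refine ⟨a * b' + a' * b, b * b', ?_, ?_, ?_⟩
  · rw [map_mul]; exact mul_ne_zero hb hb'
  · simp only [map_add, map_mul, ← h1, ← h1']; ring
  · simp only [map_add, map_mul, ← h2, ← h2']; ring

theorem SpecializesTo.mul {e e' : E} {w w' : L} (h : SpecializesTo F D u z e w)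
    (h' : SpecializesTo F D u z e' w') : SpecializesTo F D u z (e * e') (w * w') := by
  obtain ⟨a, b, hb, h1, h2⟩ := h
  obtain ⟨a', b', hb', h1', h2'⟩ := h'
  refine ⟨a * a', b * b', ?_, ?_, ?_⟩
  · rw [map_mul]; exact mul_ne_zero hb hb'
  · simp only [map_mul, ← h1, ← h1']; ring
  · simp only [map_mul, ← h2, ← h2']; ring

theorem SpecializesTo.deriv (hD : ∀ a : F, D (algebraMap F E a) = algebraMap F E (δF a))
    (hΔ : ∀ a : F, Δ (algebraMap F L a) = algebraMap F L (δF a))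
    (hdC : ∀ a : F, d (C a) = C (δF a)) (hdX : ∀ (i : Fin 3) (k : ℕ), d (X (i, k)) = X (i, k + 1))
    (hz : ∀ l, z (l + 1) = Δ (z l)) {e : E} {w : L} (h : SpecializesTo F D u z e w) :
    SpecializesTo F D u z (D e) (Δ w) := by
  obtain ⟨a, b, hb, h1, h2⟩ := h
  have hu1 : ∀ f, evB 0 (fun k => (⇑D)^[k] u) (d f) = D (evB 0 (fun k => (⇑D)^[k] u) f) :=
    evB_d hD hdC hdX (fun _ _ => (map_zero D).symm) fun k => Function.iterate_succ_apply' _ _ _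
  have hz1 : ∀ f, evB 0 z (d f) = Δ (evB 0 z f) :=
    evB_d hΔ hdC hdX (fun _ _ => (map_zero Δ).symm) hz
  refine ⟨b * d a - a * d b, b * b, ?_, ?_, ?_⟩
  · rw [map_mul]; exact mul_ne_zero hb hb
  · have h3 := congrArg D h1
    rw [Derivation.leibniz, smul_eq_mul, smul_eq_mul] at h3
    simp only [map_sub, map_mul, hu1, ← h1] at h3 ⊢
    linear_combination (evB 0 (fun k => (⇑D)^[k] u) b) * h3
  · have h3 := congrArg Δ h2
    rw [Derivation.leibniz, smul_eq_mul, smul_eq_mul] at h3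
    simp only [map_sub, map_mul, hz1, ← h2] at h3 ⊢
    linear_combination (evB 0 z b) * h3

theorem SpecializesTo.theta {η : Fin 2 → ℕ → E} (h : ∀ a k, SpecializesTo F D u z (η a k) (ξ a k))
    (f : MvPolynomial (Fin 2 × ℕ) F) : SpecializesTo F D u z (theta η f) (theta ξ f) := by
  induction f using MvPolynomial.induction_on with
  | C a =>
    have h1 : DiffCurve.theta η (C a) = algebraMap F E a := AlgHom.commutes _ a
    have h2 : DiffCurve.theta ξ (C a) = algebraMap F L a := AlgHom.commutes _ a
    rw [h1, h2]
    exact SpecializesTo.const a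
  | add p q hp hq => rw [map_add, map_add]; exact hp.add hq
  | mul_X p i hp =>
    rw [map_mul, map_mul, theta_X i.1 i.2, theta_X i.1 i.2]
    exact hp.mul (h i.1 i.2)

theorem aeval_eq_aff {n : ℕ} {R : MvPolynomial ℕ F} (hd : R.totalDegree ≤ 1)
    (ho : ordU R ≤ (n : WithBot ℕ)) : aeval z R = aff (H := L) n R z 1 := by
  conv_lhs => rw [affine_form hd ho]
  simp [aff]

/-- If `z` is a solution of the two equations at the point `ξ` then the point `η = P(u) / Q(u)`
specializes to `ξ`. -/
theorem specializesTo_point (h : Fractions P Q m) (hu : DiffTrans F D u)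
    (hD : ∀ a : F, D (algebraMap F E a) = algebraMap F E (δF a))
    (hΔ : ∀ a : F, Δ (algebraMap F L a) = algebraMap F L (δF a))
    (hdC : ∀ a : F, d (C a) = C (δF a)) (hdX : ∀ (i : Fin 3) (k : ℕ), d (X (i, k)) = X (i, k + 1))
    (hξ : ∀ a k, ξ a (k + 1) = Δ (ξ a k)) (hz : ∀ l, z (l + 1) = Δ (z l))
    (hsol : ∀ b, ξ b 0 * aff (H := L) (m b) (Q b) z 1 = aff (H := L) (m b) (P b) z 1)
    (hne : ∀ b, aff (H := L) (m b) (Q b) z 1 ≠ 0) (b : Fin 2) (k : ℕ) :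
    SpecializesTo F D u z (eta D u P Q b k) (ξ b k) := by
  induction k with
  | zero =>
    refine ⟨hat (P b), hat (Q b), ?_, ?_, ?_⟩
    · rw [evB_hat, aeval_eq_aff (h.degQ b) (h.ordQ b)]
      exact hne b
    · rw [evB_hat, evB_hat]
      exact div_mul_cancel₀ _ (hu.eval_ne_zero (h.Q_ne_zero b))
    · rw [evB_hat, evB_hat, aeval_eq_aff (h.degQ b) (h.ordQ b), aeval_eq_aff (h.degP b) (h.ordP b)]
      exact hsol b
  | succ k ih =>
    rw [eta_succ, hξ]
    exact ih.deriv hD hΔ hdC hdX hz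

theorem theta_eta_resMatQ_ne_zero_aux (L : Type*) [Field L] [Algebra F L]
    [Algebra (MvPolynomial (Fin 2 × ℕ) F) L] [IsScalarTower F (MvPolynomial (Fin 2 × ℕ) F) L]
    [IsFractionRing (MvPolynomial (Fin 2 × ℕ) F) L] (h : Fractions P Q m) (hu : DiffTrans F D u)
    (hD : ∀ a : F, D (algebraMap F E a) = algebraMap F E (δF a))
    (hdC : ∀ a : F, d (C a) = C (δF a)) (hdX : ∀ (i : Fin 3) (k : ℕ), d (X (i, k)) = X (i, k + 1))
    (hA0 : (resMatQ d P Q m 0).det ≠ 0) :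
    theta (eta D u P Q) (resMatQ d P Q m 0).det ≠ 0 := by
  obtain ⟨Δ, ξ, hΔ, hξ, hy, hx, hA, hAB⟩ := exists_generic_point L δF
    (det_resMatQ_mem hdC hdX 0) (det_resMatRest_mem hdC hdX 0) hA0
  have hR : theta ξ (resMat d P Q m).det = 0 := by
    rw [det_resMat 0]
    exact hAB
  have hlc : lc P Q m ξ 1 ≠ 0 := by
    let q := coeff (Finsupp.single (m 1) 1) (Q 1)
    let p := coeff (Finsupp.single (m 1) 1) (P 1)
    have h1 : lc P Q m ξ 1 =
        algebraMap (MvPolynomial (Fin 2 × ℕ) F) L (X (1, 0) * C q - C p) := by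
      have h2 : ∀ a : F, algebraMap F L a = algebraMap (MvPolynomial (Fin 2 × ℕ) F) L (C a) :=
        fun a => IsScalarTower.algebraMap_apply F (MvPolynomial (Fin 2 × ℕ) F) L a
      rw [lc, hy, map_sub, map_mul, h2, h2]
    rw [h1]
    intro h2
    have h3 : (X (1, 0) * C q - C p : MvPolynomial (Fin 2 × ℕ) F) = 0 :=
      (IsFractionRing.to_map_eq_zero_iff (K := L)).1 h2
    have hp : p = 0 := by
      have := congrArg constantCoeff h3
      simpa using this
    have hq : q = 0 := by
      rw [hp, map_zero, sub_zero] at h3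
      rcases mul_eq_zero.1 h3 with h4 | h4
      · exact absurd h4 (X_ne_zero _)
      · exact (map_eq_zero_iff C (C_injective _ _)).1 h4
    rcases h.coeff_ne_zero 1 with h4 | h4
    · exact h4 hp
    · exact h4 hq
  obtain ⟨z, c, μ, hzc, hz, hc, hsol, hne⟩ := exists_solution h hΔ hdC hdX hξ hA hR hlc
  by_cases hc0 : c = 0
  · subst hc0
    have hz0 : z 0 ≠ 0 := by
      intro hz0
      have : ∀ l, z l = 0 := by
        intro l
        induction l with
        | zero => exact hz0
        | succ l ih => rw [hz, ih, map_zero, mul_zero, add_zero]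
      rcases hzc with h1 | ⟨l, hl⟩
      · exact h1 rfl
      · exact hl (this l)
    obtain ⟨h1, h2⟩ := rescale hz hc (inv_ne_zero hz0)
    have haff : ∀ (n : ℕ) (R : MvPolynomial ℕ F), aff (H := L) n R (fun l => (z 0)⁻¹ * z l) 0 =
        (z 0)⁻¹ * aff (H := L) n R z 0 := by
      intro n R
      rw [← aff_mul, mul_zero]
    refine (no_homogeneous_solution (P := P) (Q := Q) (z := fun l => (z 0)⁻¹ * z l) hΔ hξ hy hx hlc
      (inv_mul_cancel₀ hz0) h1 (fun b => ?_) ?_).elim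
    · rw [haff, haff, ← hsol b]; ring
    · rw [haff]; exact mul_ne_zero (inv_ne_zero hz0) hne
  · obtain ⟨h1, h2⟩ := rescale hz hc (inv_ne_zero hc0)
    rw [inv_mul_cancel₀ hc0, Derivation.map_one_eq_zero, zero_add, mul_one] at h2
    have h1 : ∀ l, (c⁻¹ * z (l + 1)) = Δ (c⁻¹ * z l) := by
      intro l
      rw [h1 l, h2, zero_mul, add_zero]
    have haff : ∀ (n : ℕ) (R : MvPolynomial ℕ F), aff (H := L) n R (fun l => c⁻¹ * z l) 1 = c⁻¹ * aff (H := L) n R z c := by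
      intro n R
      rw [← aff_mul, inv_mul_cancel₀ hc0]
    have hsol' : ∀ b, ξ b 0 * aff (H := L) (m b) (Q b) (fun l => c⁻¹ * z l) 1 =
        aff (H := L) (m b) (P b) (fun l => c⁻¹ * z l) 1 := by
      intro b
      rw [haff, haff, ← hsol b]; ring
    have hne0 : aff (H := L) (m 0) (Q 0) (fun l => c⁻¹ * z l) 1 ≠ 0 := by
      rw [haff]; exact mul_ne_zero (inv_ne_zero hc0) hne
    have hne1 := aff_ne_zero_of_solution h hΔ hξ hy hx h1 hsol' hne0
    have hne' : ∀ b, aff (H := L) (m b) (Q b) (fun l => c⁻¹ * z l) 1 ≠ 0 := by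
      intro b
      fin_cases b
      · exact hne0
      · exact hne1
    exact (SpecializesTo.theta (specializesTo_point h hu hD hΔ hdC hdX hξ h1 hsol' hne') _).ne_zero
      hu hA

/-- If the coefficient of `x_{m₂}` in the differential resultant is nonzero then it does not vanish at
the point `(P₁(u) / Q₁(u), P₂(u) / Q₂(u))`: this point specializes to the generic zero of the
resultant, where that coefficient is nonzero. -/
theorem theta_eta_resMatQ_ne_zero (h : Fractions P Q m) (hu : DiffTrans F D u)
    (hD : ∀ a : F, D (algebraMap F E a) = algebraMap F E (δF a))
    (hdC : ∀ a : F, d (C a) = C (δF a)) (hdX : ∀ (i : Fin 3) (k : ℕ), d (X (i, k)) = X (i, k + 1))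
    (hA0 : (resMatQ d P Q m 0).det ≠ 0) :
    theta (eta D u P Q) (resMatQ d P Q m 0).det ≠ 0 :=
  theta_eta_resMatQ_ne_zero_aux (FractionRing (MvPolynomial (Fin 2 × ℕ) F)) h hu hD hdC hdX hA0

end Specialization

/-! ### Recovering `u` by Cramer's rule -/

section Generation

variable {F}
variable {P Q : Fin 2 → MvPolynomial ℕ F} {m : Fin 2 → ℕ}
variable {δF : Derivation ℤ F F} {D : Derivation ℤ E E} {u : E}
  {d : Derivation ℤ (MvPolynomial (Fin 3 × ℕ) F) (MvPolynomial (Fin 3 × ℕ) F)}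

theorem deriv_mem_genDF (hD : ∀ a : F, D (algebraMap F E a) = algebraMap F E (δF a)) {S : Set E}
    {w : E} (hw : w ∈ genDF F D S) : D w ∈ genDF F D S := by
  rw [genDF] at hw
  induction hw using IntermediateField.adjoin_induction with
  | mem w hw =>
    obtain ⟨s, hs, k, rfl⟩ := hw
    exact IntermediateField.subset_adjoin _ _ ⟨s, hs, k + 1, Function.iterate_succ_apply' _ _ _⟩
  | algebraMap a => rw [hD]; exact (genDF F D S).algebraMap_mem _
  | add v w hv hw ihv ihw => rw [map_add]; exact add_mem ihv ihw
  | mul v w hv hw ihv ihw =>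
    rw [Derivation.leibniz]
    exact add_mem (mul_mem hv ihw) (mul_mem hw ihv)
  | inv v hv ihv =>
    rw [Derivation.leibniz_inv]
    exact mul_mem (neg_mem (pow_mem (inv_mem hv) 2)) ihv

theorem genDF_le (hD : ∀ a : F, D (algebraMap F E a) = algebraMap F E (δF a)) {S S' : Set E}
    (h : ∀ s ∈ S, s ∈ genDF F D S') : genDF F D S ≤ genDF F D S' := by
  refine IntermediateField.adjoin_le_iff.2 ?_
  rintro _ ⟨s, hs, k, rfl⟩
  induction k with
  | zero => exact h s hs
  | succ k ih =>
    rw [Function.iterate_succ_apply']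
    exact deriv_mem_genDF hD ih

theorem self_mem_genDF {S : Set E} {s : E} (hs : s ∈ S) (k : ℕ) : (⇑D)^[k] s ∈ genDF F D S :=
  IntermediateField.subset_adjoin _ _ ⟨s, hs, k, rfl⟩

theorem evalD_mem_genDF (R : MvPolynomial ℕ F) : evalD F D u R ∈ genDF F D {u} := by
  induction R using MvPolynomial.induction_on with
  | C a => rw [evalD, aeval_C]; exact (genDF F D {u}).algebraMap_mem _
  | add p q hp hq => rw [map_add]; exact add_mem hp hq
  | mul_X p i hp =>
    rw [map_mul]
    refine mul_mem hp ?_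
    rw [evalD, aeval_X]
    exact self_mem_genDF (F := F) (Set.mem_singleton u) i

/-- The differential field `F⟨η₁, η₂⟩` of the parametrized point. -/
def pointField (D : Derivation ℤ E E) (u : E) (P Q : Fin 2 → MvPolynomial ℕ F) :
    IntermediateField F E :=
  genDF F D {evalD F D u (P 0) / evalD F D u (Q 0), evalD F D u (P 1) / evalD F D u (Q 1)}

theorem eta_mem_pointField (a : Fin 2) (k : ℕ) : eta D u P Q a k ∈ pointField D u P Q := by
  fin_cases a
  · exact self_mem_genDF (F := F) (D := D) (Set.mem_insert _ _) k
  · exact self_mem_genDF (F := F) (D := D) (Set.mem_insert_of_mem _ (Set.mem_singleton _)) k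

theorem pointField_le (hD : ∀ a : F, D (algebraMap F E a) = algebraMap F E (δF a)) :
    pointField D u P Q ≤ genDF F D {u} := by
  refine genDF_le hD ?_
  rintro _ (rfl | rfl) <;> exact div_mem (evalD_mem_genDF _) (evalD_mem_genDF _)

theorem theta_mem_pointField (f : MvPolynomial (Fin 2 × ℕ) F) :
    theta (eta D u P Q) f ∈ pointField D u P Q := by
  induction f using MvPolynomial.induction_on with
  | C a =>
    have h1 : theta (eta D u P Q) (C a) = algebraMap F E a := AlgHom.commutes _ a
    rw [h1]
    exact (pointField D u P Q).algebraMap_mem _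
  | add p q hp hq => rw [map_add]; exact add_mem hp hq
  | mul_X p i hp =>
    rw [map_mul, theta_X i.1 i.2]
    exact mul_mem hp (eta_mem_pointField _ _)

/-- A derivation of a field as an additive map on the one-dimensional vector space. -/
def derivAdd {H : Type*} [Field H] (Δ : Derivation ℤ H H) : H →+ H :=
  AddMonoidHomClass.toAddMonoidHom Δ

theorem derivAdd_smul {H : Type*} [Field H] (Δ : Derivation ℤ H H) (x y : H) :
    derivAdd Δ (x • y) = Δ x • y + x • derivAdd Δ y := by
  change Δ (x * y) = Δ x * y + x * Δ y
  rw [Derivation.leibniz, smul_eq_mul, smul_eq_mul]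
  ring

/-- `u` solves all the equations `d^k f_a = 0` at the point `η`. -/
theorem lam_orbit (h : Fractions P Q m) (hu : DiffTrans F D u)
    (hD : ∀ a : F, D (algebraMap F E a) = algebraMap F E (δF a))
    (hdC : ∀ a : F, d (C a) = C (δF a)) (hdX : ∀ (i : Fin 3) (k : ℕ), d (X (i, k)) = X (i, k + 1))
    (a : Fin 2) (k : ℕ) :
    lam (eta D u P Q) (fun l => (⇑D)^[l] u) (1 : E) (fd d P Q a k) = 0 := by
  induction k with
  | zero =>
    rw [lam_fd_zero h, ← aeval_eq_aff (h.degQ a) (h.ordQ a), ← aeval_eq_aff (h.degP a) (h.ordP a)]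
    exact sub_eq_zero.2 (div_mul_cancel₀ _ (hu.eval_ne_zero (h.Q_ne_zero a)))
  | succ k ih =>
    rw [fd_succ, lam_d hD hdC hdX (fun a k => eta_succ a k) (derivAdd D) (derivAdd_smul D), ih, map_zero,
      zero_add]
    have h1 : (fun l => (⇑D)^[l + 1] u - derivAdd D ((⇑D)^[l] u)) = fun _ => 0 := by
      funext l
      rw [Function.iterate_succ_apply']
      exact sub_self _
    have h2 : -derivAdd D (1 : E) = 0 := neg_eq_zero.2 (Derivation.map_one_eq_zero D)
    rw [h1, h2, lam_zero]

theorem lam_orbit_trunc (h : Fractions P Q m) (hu : DiffTrans F D u)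
    (hD : ∀ a : F, D (algebraMap F E a) = algebraMap F E (δF a))
    (hdC : ∀ a : F, d (C a) = C (δF a)) (hdX : ∀ (i : Fin 3) (k : ℕ), d (X (i, k)) = X (i, k + 1))
    {n : ℕ} (a : Fin 2) (k : ℕ) (hk : m a + k ≤ n) :
    lam (eta D u P Q) (fun l => if l ≤ n then (⇑D)^[l] u else 0) (1 : E) (fd d P Q a k) = 0 := by
  have h1 := lam_fd_congr h hD hdC hdX (ξ := eta D u P Q) (eta_succ (F := F)) (derivAdd D)
    (derivAdd_smul D) a k (c := (1 : E)) (z := fun l => if l ≤ n then (⇑D)^[l] u else 0) (z' := fun l => (⇑D)^[l] u)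
    (fun l hl => if_pos (by omega))
  have h2 := lam_orbit h hu hD hdC hdX a k
  rw [h2, zero_add] at h1
  rw [h1]
  simp [hk]

theorem add_le_of_le_rev (m : Fin 2 → ℕ) (b : Fin 2) {k : ℕ} (hk : k ≤ m b.rev) :
    m b + k ≤ m 0 + m 1 := by
  fin_cases b
  · have hk : k ≤ m 1 := hk
    exact Nat.add_le_add_left hk _
  · have hk : k ≤ m 0 := hk
    change m 1 + k ≤ _
    omega

theorem eq_div_of_cramer {H : Type*} [Field H] {a s t q w : H} (ha : a ≠ 0) (h1 : a * 1 = s * q)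
    (h2 : a * w = t * q) : w = t / s := by
  rw [mul_one] at h1
  subst h1
  have hs := left_ne_zero_of_mul ha
  have hq := right_ne_zero_of_mul ha
  rw [eq_div_iff hs]
  refine mul_right_cancel₀ hq ?_
  rw [← h2]
  ring

/-- If the coefficient of `x_{m₂}` in the resultant does not vanish at `η`, then Cramer's rule
expresses `u` rationally in terms of `η` and its derivatives. -/
theorem mem_pointField (h : Fractions P Q m) (hu : DiffTrans F D u)
    (hD : ∀ a : F, D (algebraMap F E a) = algebraMap F E (δF a))
    (hdC : ∀ a : F, d (C a) = C (δF a)) (hdX : ∀ (i : Fin 3) (k : ℕ), d (X (i, k)) = X (i, k + 1))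
    (hA : theta (eta D u P Q) (resMatQ d P Q m 0).det ≠ 0) : u ∈ pointField D u P Q := by
  obtain ⟨s, t, hst⟩ := exists_cramer d P Q m 0 (eta D u P Q)
  obtain ⟨h1, h2⟩ := hst (fun l => if l ≤ m 0 + m 1 then (⇑D)^[l] u else 0) 1
    (fun l hl => if_neg (by omega))
    (fun b k hk _ => lam_orbit_trunc h hu hD hdC hdX b k (add_le_of_le_rev m b hk))
  have hut := eq_div_of_cramer hA h1 h2
  simp only [Nat.zero_le, if_true, Function.iterate_zero, id] at hut
  have hmem : theta (eta D u P Q) t / theta (eta D u P Q) s ∈ pointField D u P Q :=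
    div_mem (theta_mem_pointField _) (theta_mem_pointField _)
  rwa [← hut] at hmem

end Generation

/-! ### Tangent vectors at `(η, u)` -/

section TangentVectors

variable {F}
variable {P Q : Fin 2 → MvPolynomial ℕ F} {m : Fin 2 → ℕ}
variable {δF : Derivation ℤ F F} {D : Derivation ℤ E E} {u : E}
  {d : Derivation ℤ (MvPolynomial (Fin 3 × ℕ) F) (MvPolynomial (Fin 3 × ℕ) F)}

theorem ringHom_eq_of_mem_supported {σ A : Type*} [CommRing A] {f g : MvPolynomial σ F →+* A}
    {S : Set σ} (hC : ∀ a, f (C a) = g (C a)) (hX : ∀ i ∈ S, f (X i) = g (X i))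
    {p : MvPolynomial σ F} (hp : p ∈ supported F S) : f p = g p := by
  rw [supported_eq_adjoin_X] at hp
  induction hp using Algebra.adjoin_induction with
  | mem x hx => obtain ⟨i, hi, rfl⟩ := hx; exact hX i hi
  | algebraMap r => exact hC r
  | add x y hx hy ihx ihy => rw [map_add, map_add, ihx, ihy]
  | mul x y hx hy ihx ihy => rw [map_mul, map_mul, ihx, ihy]

theorem evB_orbit (h : Fractions P Q m) (hu : DiffTrans F D u)
    (hD : ∀ a : F, D (algebraMap F E a) = algebraMap F E (δF a))
    (hdC : ∀ a : F, d (C a) = C (δF a)) (hdX : ∀ (i : Fin 3) (k : ℕ), d (X (i, k)) = X (i, k + 1))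
    (a : Fin 2) (k : ℕ) :
    evB (eta D u P Q) (fun l => (⇑D)^[l] u) (fd d P Q a k) = 0 := by
  induction k with
  | zero =>
    rw [fd_zero, map_sub, map_mul, evB_hat, evB_hat, evB_X]
    exact sub_eq_zero.2 (div_mul_cancel₀ _ (hu.eval_ne_zero (h.Q_ne_zero a)))
  | succ k ih =>
    rw [fd_succ, evB_d hD hdC hdX (fun a k => eta_succ a k)
      (fun k => Function.iterate_succ_apply' _ _ _), ih, map_zero]

/-- A tangent vector `s` at the generic point `(η, u)` of the graph of the parametrization, lying
over the zero tangent vector at `η`, vanishes on every `u^(l)` that is a rational function of `η`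
and its derivatives: the first order deformation `u^(l) ↦ u^(l) + ε s_l` of `F⟨u⟩` fixes
all the `η_a^(k)`, hence it fixes the field they generate. -/
theorem tangent_eq_zero (h : Fractions P Q m) (hu : DiffTrans F D u)
    (hD : ∀ a : F, D (algebraMap F E a) = algebraMap F E (δF a))
    (hdC : ∀ a : F, d (C a) = C (δF a)) (hdX : ∀ (i : Fin 3) (k : ℕ), d (X (i, k)) = X (i, k + 1))
    {s : ℕ → E} (hs : ∀ a k, lam (eta D u P Q) s 0 (fd d P Q a k) = 0) {l : ℕ}
    (hl : (⇑D)^[l] u ∈ pointField D u P Q) : s l = 0 := by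
  let L := FractionRing (MvPolynomial ℕ F)
  have hinj : Function.Injective (evalD F D u) := hu
  let j : L →ₐ[F] E := IsFractionRing.liftAlgHom (g := evalD F D u) hinj
  have hj : ∀ p, j (algebraMap (MvPolynomial ℕ F) L p) = evalD F D u p := fun p =>
    IsFractionRing.lift_algebraMap hinj p
  have hjX : ∀ k, j (algebraMap (MvPolynomial ℕ F) L (X k)) = (⇑D)^[k] u := fun k => by
    rw [hj, evalD, aeval_X]
  obtain ⟨κ, hκ1, hκC, hκX⟩ := exists_lift_dual (L := L) (σ := ℕ) j.toRingHom
    ((TrivSqZeroExt.inlHom E E).comp (algebraMap F E)) (fun a => by simp) s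
  change ∀ x, (κ x).fst = j x at hκ1
  change ∀ i, κ (algebraMap (MvPolynomial ℕ F) L (X i)) =
    TrivSqZeroExt.inl (j (algebraMap (MvPolynomial ℕ F) L (X i))) + _ at hκX
  have hrange : ∀ a k, ∃ y : L, j y = eta D u P Q a k := by
    intro a k
    have h1 : genDF F D {u} ≤ j.fieldRange := by
      refine IntermediateField.adjoin_le_iff.2 ?_
      rintro _ ⟨_, rfl, k, rfl⟩
      exact ⟨_, hjX k⟩
    exact h1 (pointField_le hD (eta_mem_pointField a k))
  choose y hy using hrange
  let Φ' : MvPolynomial (Fin 3 × ℕ) F →+* L := evB y fun k => algebraMap (MvPolynomial ℕ F) L (X k)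
  have hjΦ : ∀ f, j (Φ' f) = evB (eta D u P Q) (fun l => (⇑D)^[l] u) f := by
    have : j.toRingHom.comp Φ' = evB (eta D u P Q) (fun l => (⇑D)^[l] u) := by
      apply MvPolynomial.ringHom_ext
      · intro a
        simp [Φ']
      · intro p
        rcases fin3_cases p with ⟨a, k, rfl⟩ | ⟨k, rfl⟩
        · rw [RingHom.comp_apply, evB_X, evB_X]
          exact hy a k
        · rw [RingHom.comp_apply, evB_U, evB_U]
          exact hjX k
    exact fun f => congrArg (fun g => g f) this
  have hΦfd : ∀ a k, Φ' (fd d P Q a k) = 0 := fun a k =>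
    (map_eq_zero j).1 ((hjΦ _).trans (evB_orbit h hu hD hdC hdX a k))
  have hpsi : ∀ a k, psi (eta D u P Q) (fun l => (⇑D)^[l] u) s (fd d P Q a k) = 0 := by
    intro a k
    refine TrivSqZeroExt.ext ?_ ?_
    · rw [fst_psi, evB_orbit h hu hD hdC hdX]
      rfl
    · exact (grad_fd h hD hdC hdX (fun a k => eta_succ a k)
        (fun k => Function.iterate_succ_apply' _ _ _) (derivAdd D) (derivAdd_smul D) a k s).trans
        (hs a k)
  have hfix : ∀ a k, κ (y a k) = TrivSqZeroExt.inl (eta D u P Q a k) := by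
    intro a k
    induction k using Nat.strong_induction_on with
    | _ k ih =>
      have hagree : ∀ f ∈ supported F (up {p : Fin 2 × ℕ | p.1 = a ∧ p.2 < k}),
          (κ.comp Φ') f = psi (eta D u P Q) (fun l => (⇑D)^[l] u) s f := by
        intro f hf
        refine ringHom_eq_of_mem_supported (fun b => ?_) ?_ hf
        · rw [RingHom.comp_apply, evB_C, hκC]
          simp [psi]
        · rintro ⟨i, l⟩ (hi | ⟨⟨b, e⟩, ⟨hb, he⟩, hp⟩)
          · change i = 2 at hi
            subst hi
            rw [RingHom.comp_apply, evB_U, hκX, hjX]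
            simp [psi]
          · rw [hp]
            change b = a at hb
            subst hb
            rw [RingHom.comp_apply, evB_X, ih e he]
            fin_cases b <;> simp [psi]
      have hQ := hagree _ (hat_mem_supported (Q a) _)
      have hR := hagree _ (rest_mem_supported hdC hdX a k (P := P) (Q := Q))
      have h1 := hpsi a k
      have h2 : (κ.comp Φ') (fd d P Q a k) = 0 := by
        rw [RingHom.comp_apply, hΦfd, map_zero]
      rw [fd_eq, map_add, map_mul, ← hR, ← hQ] at h1
      rw [fd_eq, map_add, map_mul] at h2
      have hX : (κ.comp Φ') (X (a.castSucc, k)) = κ (y a k) := by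
        rw [RingHom.comp_apply, evB_X]
      have hX' : psi (F := F) (eta D u P Q) (fun l => (⇑D)^[l] u) s (X (a.castSucc, k)) =
          TrivSqZeroExt.inl (eta D u P Q a k) := by
        fin_cases a <;> simp [psi]
      have hunit : IsUnit ((κ.comp Φ') (hat (Q a))) := by
        rw [RingHom.comp_apply]
        refine RingHom.isUnit_map κ (isUnit_iff_ne_zero.2 fun h0 => ?_)
        have h3 := hjΦ (hat (Q a))
        rw [h0, map_zero, evB_hat] at h3
        exact hu.eval_ne_zero (h.Q_ne_zero a) h3.symm
      rw [hX'] at h1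
      rw [hX] at h2
      exact hunit.mul_right_cancel (add_right_cancel (h2.trans h1.symm))
  have hfield : ∀ w ∈ pointField D u P Q, ∃ x : L, j x = w ∧ κ x = TrivSqZeroExt.inl w := by
    intro w hw
    rw [pointField, genDF] at hw
    induction hw using IntermediateField.adjoin_induction with
    | mem w hw =>
      obtain ⟨v, hv, k, rfl⟩ := hw
      rcases hv with rfl | rfl
      · exact ⟨y 0 k, hy 0 k, hfix 0 k⟩
      · exact ⟨y 1 k, hy 1 k, hfix 1 k⟩
    | algebraMap a => exact ⟨algebraMap F L a, j.commutes a, hκC a⟩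
    | add v w hv hw ihv ihw =>
      obtain ⟨x, hx, hx'⟩ := ihv
      obtain ⟨x₂, hx₂, hx₂'⟩ := ihw
      exact ⟨x + x₂, by rw [map_add, hx, hx₂], by rw [map_add, hx', hx₂', TrivSqZeroExt.inl_add]⟩
    | mul v w hv hw ihv ihw =>
      obtain ⟨x, hx, hx'⟩ := ihv
      obtain ⟨x₂, hx₂, hx₂'⟩ := ihw
      exact ⟨x * x₂, by rw [map_mul, hx, hx₂], by rw [map_mul, hx', hx₂', TrivSqZeroExt.inl_mul]⟩
    | inv v hv ihv =>
      obtain ⟨x, rfl, hx'⟩ := ihv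
      refine ⟨x⁻¹, map_inv₀ _ _, ?_⟩
      by_cases h0 : x = 0
      · simp [h0]
      · have h1 : κ x * κ x⁻¹ = 1 := by rw [← map_mul, mul_inv_cancel₀ h0, map_one]
        have h2 : TrivSqZeroExt.inl (M := E) (j x)⁻¹ * κ x = 1 := by
          rw [hx', ← TrivSqZeroExt.inl_mul, inv_mul_cancel₀ ((map_ne_zero j).2 h0)]
          rfl
        exact (left_inv_eq_right_inv h2 h1).symm
  obtain ⟨x, hx, hx'⟩ := hfield _ hl
  rw [← hjX l] at hx
  rw [j.toRingHom.injective hx, hκX, hjX] at hx'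
  simpa using congrArg TrivSqZeroExt.snd hx'

end TangentVectors

/-! ### Extension of functionals on `K[X]` -/

section Functionals

/-- A nontrivial relation between vectors modulo a subspace expresses one of them through the
preceding ones. -/
theorem exists_mem_sup_span {K W : Type*} [Field K] [AddCommGroup W] [Module K W]
    (X₁ : Submodule K W) (r : ℕ → W) {p : ℕ}
    (h : ¬ LinearIndependent K fun i : Fin p => X₁.mkQ (r i)) :
    ∃ e < p, r e ∈ X₁ ⊔ Submodule.span K (r '' Set.Iio e) := by
  classical
  obtain ⟨g, hg, i, hi⟩ := Fintype.not_linearIndependent_iff.1 h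
  let s : Finset (Fin p) := Finset.univ.filter fun i => g i ≠ 0
  have hs : s.Nonempty := ⟨i, by simpa [s] using hi⟩
  let e := s.max' hs
  have he : g e ≠ 0 := (Finset.mem_filter.1 (s.max'_mem hs)).2
  have hlarge : ∀ k, e < k → g k = 0 := by
    intro k hk
    by_contra h0
    exact absurd (s.le_max' k (Finset.mem_filter.2 ⟨Finset.mem_univ _, h0⟩)) (not_le.2 hk)
  refine ⟨e, e.2, ?_⟩
  set Y := X₁ ⊔ Submodule.span K (r '' Set.Iio (e : ℕ)) with hY
  have hsum : ∑ k, g k • r k ∈ Y := by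
    refine le_sup_left (a := X₁) ?_
    rw [← Submodule.ker_mkQ X₁, LinearMap.mem_ker, map_sum]
    simpa using hg
  rw [← Finset.add_sum_erase _ _ (Finset.mem_univ e)] at hsum
  have hrest : ∑ k ∈ Finset.univ.erase e, g k • r k ∈ Y := by
    refine Submodule.sum_mem _ fun k hk => ?_
    rcases lt_trichotomy k e with h1 | h1 | h1
    · exact Y.smul_mem _ (le_sup_right (a := X₁) (Submodule.subset_span ⟨k, h1, rfl⟩))
    · exact absurd h1 (Finset.ne_of_mem_erase hk)
    · rw [hlarge k h1, zero_smul]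
      exact Y.zero_mem
  have h1 := (Submodule.add_mem_iff_left Y hrest).1 hsum
  exact (Submodule.smul_mem_iff Y he).1 h1

/-- Let `ρ 0 k = T^k (ρ 0 0)` and `ρ 1 k = T^k (ρ 1 0)` for an operator `T` on `K[X]`, where
`ρ 0 k` has degree `p + k`. A functional that kills `ρ 0 k` for `k < q` and `ρ 1 k` for
`k < p` can be modified in degrees `≥ p + q` so as to kill all the `ρ a k`.

The space `X₁` spanned by all the `ρ 0 k` has codimension `p`. So either `X₁` and the `p` vectors
`ρ 1 k`, `k < p`, span everything, and then the functional vanishes in degrees `< p + q`, or some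
`ρ 1 e` with `e < p` lies in the span of `X₁` and the `ρ 1 k` with `k < e`, and then this span
is stable under `T`. -/
theorem exists_functional {K : Type*} [Field K] {Δ : K → K} (T : Polynomial K →+ Polynomial K)
    (hT : ∀ (h : K) (v : Polynomial K), T (h • v) = Δ h • v + h • T v)
    (ρ : Fin 2 → ℕ → Polynomial K) (hρ : ∀ a k, ρ a (k + 1) = T (ρ a k)) {p q : ℕ}
    (hdeg : ∀ k, (ρ 0 k).degree = (p + k : ℕ))
    (hlow : ∀ k < p, ρ 1 k ∈ Polynomial.degreeLT K (p + q))
    (φ : Polynomial K →ₗ[K] K) (hφ0 : ∀ k < q, φ (ρ 0 k) = 0) (hφ1 : ∀ k < p, φ (ρ 1 k) = 0) :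
    ∃ φ' : Polynomial K →ₗ[K] K,
      (∀ v ∈ Polynomial.degreeLT K (p + q), φ' v = φ v) ∧ ∀ a k, φ' (ρ a k) = 0 := by
  classical
  let S : Polynomial.Sequence K :=
    { elems' := fun k => if k < p then Polynomial.X ^ k else ρ 0 (k - p)
      degree_eq' := by
        intro k
        split_ifs with hk
        · exact Polynomial.degree_X_pow k
        · rw [hdeg]
          congr 1
          omega }
  have hS0 : ∀ k, S (p + k) = ρ 0 k := by
    intro k
    change (if p + k < p then _ else ρ 0 (p + k - p)) = _
    rw [if_neg (by omega), Nat.add_sub_cancel_left]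
  have hC : ∀ i, IsUnit (S i).leadingCoeff := fun i =>
    isUnit_iff_ne_zero.2 (Polynomial.leadingCoeff_ne_zero.2 (S.ne_zero i))
  let b := S.basis hC
  have hb : ∀ i, b i = S i := S.basis_eq_self hC
  let φ' : Polynomial K →ₗ[K] K := b.constr K fun k => if k < p + q then φ (S k) else 0
  have hφ' : ∀ k, φ' (S k) = if k < p + q then φ (S k) else 0 := fun k => by
    have h1 := b.constr_basis K (fun k => if k < p + q then φ (S k) else 0) k
    rwa [hb] at h1
  have hagree : ∀ v ∈ Polynomial.degreeLT K (p + q), φ' v = φ v := by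
    intro v hv
    rw [← S.span_degreeLT (fun i _ => hC i)] at hv
    refine LinearMap.eqOn_span (f := φ') (g := φ) ?_ hv
    rintro _ ⟨k, hk, rfl⟩
    rw [hφ', if_pos (Set.mem_Iio.1 hk)]
  have hkill0 : ∀ k, φ' (ρ 0 k) = 0 := by
    intro k
    rw [← hS0, hφ']
    split_ifs with hk
    · rw [hS0]
      exact hφ0 k (by omega)
    · rfl
  have hkill1 : ∀ k < p, φ' (ρ 1 k) = 0 := fun k hk => (hagree _ (hlow k hk)).trans (hφ1 k hk)
  refine ⟨φ', hagree, ?_⟩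
  set X₁ : Submodule K (Polynomial K) := Submodule.span K (Set.range (ρ 0)) with hX₁
  have hX₁ker : X₁ ≤ LinearMap.ker φ' := by
    rw [hX₁, Submodule.span_le]
    rintro _ ⟨k, rfl⟩
    exact hkill0 k
  by_cases hli : LinearIndependent K fun i : Fin p => X₁.mkQ (ρ 1 i)
  · have hspan : Submodule.span K (Set.range fun i : Fin p => X₁.mkQ (S i)) = ⊤ := by
      rw [eq_top_iff, ← Submodule.range_mkQ X₁, LinearMap.range_eq_map, ← S.span hC,
        Submodule.map_span, Submodule.span_le]
      rintro _ ⟨_, ⟨k, rfl⟩, rfl⟩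
      by_cases hk : k < p
      · exact Submodule.subset_span ⟨⟨k, hk⟩, rfl⟩
      · have h1 : S k ∈ X₁ := by
          obtain ⟨l, rfl⟩ := Nat.exists_eq_add_of_le (not_lt.1 hk)
          rw [hS0]
          exact Submodule.subset_span ⟨l, rfl⟩
        have h2 : X₁.mkQ (S k) = 0 := by
          rwa [← LinearMap.mem_ker, Submodule.ker_mkQ]
        rw [h2]
        exact Submodule.zero_mem _
    have hfin : FiniteDimensional K (Polynomial K ⧸ X₁) :=
      ⟨Submodule.fg_def.2 ⟨_, Set.finite_range _, hspan⟩⟩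
    have hle : Module.finrank K (Polynomial K ⧸ X₁) ≤ Fintype.card (Fin p) := by
      rw [← finrank_top, ← hspan]
      exact finrank_range_le_card _
    have htop := hli.span_eq_top_of_card_eq_finrank' (le_antisymm hli.fintype_card_le_finrank hle)
    have hzero : X₁.liftQ φ' hX₁ker = 0 := by
      refine LinearMap.ext_on_range htop fun i => ?_
      rw [LinearMap.zero_apply]
      exact hkill1 i i.2
    intro a k
    have := congrArg (fun f => f (X₁.mkQ (ρ a k))) hzero
    exact this
  · obtain ⟨e, hep, he⟩ := exists_mem_sup_span X₁ (ρ 1) hli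
    rw [hX₁, ← Submodule.span_union] at he
    set Y := Submodule.span K (Set.range (ρ 0) ∪ ρ 1 '' Set.Iio e) with hY
    have hY0 : ∀ k, ρ 0 k ∈ Y := fun k => Submodule.subset_span (Or.inl ⟨k, rfl⟩)
    have hYlt : ∀ k < e, ρ 1 k ∈ Y := fun k hk => Submodule.subset_span (Or.inr ⟨k, hk, rfl⟩)
    have hstable : ∀ v ∈ Y, T v ∈ Y := by
      intro v hv
      refine Submodule.span_induction (p := fun v _ => T v ∈ Y) ?_ ?_ ?_ ?_ hv
      · rintro _ (⟨k, rfl⟩ | ⟨k, hk, rfl⟩)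
        · rw [← hρ]
          exact hY0 _
        · rw [← hρ]
          rcases Nat.lt_or_ge (k + 1) e with h1 | h1
          · exact hYlt _ h1
          · have h2 : k + 1 = e := le_antisymm (Nat.succ_le_of_lt (Set.mem_Iio.1 hk)) h1
            rwa [h2]
      · rw [map_zero]
        exact Y.zero_mem
      · intro v w _ _ hv hw
        rw [map_add]
        exact Y.add_mem hv hw
      · intro h v hvY hv
        rw [hT]
        exact Y.add_mem (Y.smul_mem _ hvY) (Y.smul_mem _ hv)
    have hY1 : ∀ k, ρ 1 k ∈ Y := by
      intro k
      induction k with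
      | zero =>
        rcases Nat.eq_zero_or_pos e with rfl | h1
        · exact he
        · exact hYlt 0 h1
      | succ k ih =>
        rw [hρ]
        exact hstable _ ih
    have hYker : Y ≤ LinearMap.ker φ' := by
      rw [hY, Submodule.span_le]
      rintro _ (⟨k, rfl⟩ | ⟨k, hk, rfl⟩)
      · exact hkill0 k
      · exact hkill1 k (lt_trans hk hep)
    intro a k
    fin_cases a
    · exact hkill0 k
    · exact hYker (hY1 k)

end Functionals

/-! ### Necessity of the nonvanishing of the minors -/

section Necessity

variable {F}
variable {P Q : Fin 2 → MvPolynomial ℕ F} {m : Fin 2 → ℕ}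
variable {δF : Derivation ℤ F F} {D : Derivation ℤ E E} {u : E}
  {d : Derivation ℤ (MvPolynomial (Fin 3 × ℕ) F) (MvPolynomial (Fin 3 × ℕ) F)}

/-- The left multiplication by the indeterminate on the ring of differential operators over `E`,
where the operator of order `l` taking the `l`-th derivative is encoded as the monomial
`X^l ∈ E[X]`. -/
def opShift (D : Derivation ℤ E E) : Polynomial E →+ Polynomial E :=
  letI : Differential E := ⟨D⟩
  AddMonoidHomClass.toAddMonoidHom (Differential.mapCoeffs (A := E)) +
    AddMonoidHom.mulLeft Polynomial.X

theorem opShift_smul (h : E) (v : Polynomial E) :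
    opShift D (h • v) = D h • v + h • opShift D v := by
  let _ : Differential E := ⟨D⟩
  change Differential.mapCoeffs (h • v) + Polynomial.X * (h • v) =
    D h • v + h • (Differential.mapCoeffs v + Polynomial.X * v)
  have hC : Differential.mapCoeffs (Polynomial.C h) = Polynomial.C (D h) :=
    Differential.mapCoeffs_C h
  simp only [Polynomial.smul_eq_C_mul, Derivation.leibniz, hC, smul_eq_mul]
  ring

theorem opShift_X_pow (l : ℕ) :
    opShift D (Polynomial.X ^ l) = (Polynomial.X : Polynomial E) ^ (l + 1) := by
  let _ : Differential E := ⟨D⟩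
  change Differential.mapCoeffs (Polynomial.X ^ l : Polynomial E) + Polynomial.X * Polynomial.X ^ l = _
  have h0 : Differential.mapCoeffs (Polynomial.X : Polynomial E) = 0 := Differential.mapCoeffs_X
  rw [Derivation.leibniz_pow, h0, smul_zero, smul_zero, zero_add, pow_succ']

/-- The linear part in `u` of `d^k f_a` at the point `η`, as a differential operator. -/
def linOp (d : Derivation ℤ (MvPolynomial (Fin 3 × ℕ) F) (MvPolynomial (Fin 3 × ℕ) F))
    (D : Derivation ℤ E E) (u : E) (P Q : Fin 2 → MvPolynomial ℕ F) (a : Fin 2) (k : ℕ) :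
    Polynomial E :=
  lam (eta D u P Q) (fun l => Polynomial.X ^ l) 0 (fd d P Q a k)

theorem map_linOp (φ : Polynomial E →ₗ[E] E) (a : Fin 2) (k : ℕ) :
    φ (linOp d D u P Q a k) =
      lam (eta D u P Q) (fun l => φ (Polynomial.X ^ l)) 0 (fd d P Q a k) := by
  rw [linOp, map_lam, map_zero]

theorem linOp_succ (hD : ∀ a : F, D (algebraMap F E a) = algebraMap F E (δF a))
    (hdC : ∀ a : F, d (C a) = C (δF a)) (hdX : ∀ (i : Fin 3) (k : ℕ), d (X (i, k)) = X (i, k + 1))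
    (a : Fin 2) (k : ℕ) :
    linOp d D u P Q a (k + 1) = opShift D (linOp d D u P Q a k) := by
  rw [linOp, fd_succ, lam_d hD hdC hdX (fun a k => eta_succ a k) (opShift D) opShift_smul]
  simp only [opShift_X_pow, sub_self, map_zero, neg_zero, lam_zero, add_zero]
  rfl

theorem coeff_linOp (h : Fractions P Q m)
    (hD : ∀ a : F, D (algebraMap F E a) = algebraMap F E (δF a))
    (hdC : ∀ a : F, d (C a) = C (δF a)) (hdX : ∀ (i : Fin 3) (k : ℕ), d (X (i, k)) = X (i, k + 1))
    (a : Fin 2) (k n : ℕ) (hn : m a + k ≤ n) :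
    (linOp d D u P Q a k).coeff n = if m a + k = n then lc P Q m (eta D u P Q) a else 0 := by
  have h1 := map_linOp (d := d) (D := D) (u := u) (P := P) (Q := Q) (Polynomial.lcoeff E n) a k
  simp only [Polynomial.lcoeff_apply, Polynomial.coeff_X_pow] at h1
  rw [h1, lam_fd_top h hD hdC hdX (fun a k => eta_succ a k) (derivAdd D) (derivAdd_smul D) a k _
    (fun l hl => if_neg (by omega))]
  split_ifs with h2 h3 h3
  · simp
  · omega
  · omega
  · simp

theorem degree_linOp (h : Fractions P Q m) (hu : DiffTrans F D u)
    (hD : ∀ a : F, D (algebraMap F E a) = algebraMap F E (δF a))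
    (hdC : ∀ a : F, d (C a) = C (δF a)) (hdX : ∀ (i : Fin 3) (k : ℕ), d (X (i, k)) = X (i, k + 1))
    (a : Fin 2) (k : ℕ) : (linOp d D u P Q a k).degree = (m a + k : ℕ) := by
  refine le_antisymm ((Polynomial.degree_le_iff_coeff_zero _ _).2 fun n hn => ?_)
    (Polynomial.le_degree_of_ne_zero ?_)
  · have hn : m a + k < n := by exact_mod_cast hn
    rw [coeff_linOp h hD hdC hdX a k n hn.le, if_neg hn.ne]
  · rw [coeff_linOp h hD hdC hdX a k _ le_rfl, if_pos rfl]
    exact lc_eta_ne_zero h hu a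

/-- If `det resMatQ a` vanishes at `η`, the tangent vectors at `(η, u)` over the zero vector at
`η` that are visible in orders `< m₁ + m₂` do not all vanish. -/
theorem exists_tangent (h : Fractions P Q m) (hu : DiffTrans F D u)
    (hD : ∀ a : F, D (algebraMap F E a) = algebraMap F E (δF a))
    (hdC : ∀ a : F, d (C a) = C (δF a)) (hdX : ∀ (i : Fin 3) (k : ℕ), d (X (i, k)) = X (i, k + 1))
    {a : Fin 2} (h0 : theta (eta D u P Q) (resMatQ d P Q m a).det = 0) :
    ∃ z : ℕ → E, (∃ l < m 0 + m 1, z l ≠ 0) ∧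
      ∀ b k, k < m b.rev → lam (eta D u P Q) z 0 (fd d P Q b k) = 0 := by
  obtain ⟨z, c, -, hne, hq, hrow⟩ := exists_kernel_resMatQ h0
  -- subtracting `c` times the solution `(u^(l))` makes the system homogeneous
  let z' : ℕ → E := fun l => z l - c • (⇑D)^[l] u
  have hz'row : ∀ b k, k ≤ m b.rev → (b, k) ≠ (a, m a.rev) →
      lam (eta D u P Q) z' 0 (fd d P Q b k) = 0 := by
    intro b k hk hbk
    have h1 := lam_sub_smul (ξ := eta D u P Q) (z := z) (z' := fun l => (⇑D)^[l] u) (c := c)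
      (c' := (1 : E)) c (fd d P Q b k)
    rw [hrow b k hk hbk, lam_orbit h hu hD hdC hdX, smul_eq_mul c (1 : E), mul_one, sub_self,
      smul_zero, sub_zero] at h1
    exact h1
  have hma : ∀ b : Fin 2, m b ≤ m 0 + m 1 := fun b => add_le_of_le_rev m b (Nat.zero_le _)
  have hz'ne : ∃ l ≤ m 0 + m 1, z' l ≠ 0 := by
    by_contra! hall
    have hz : ∀ l ≤ m 0 + m 1, z l = c * (⇑D)^[l] u := fun l hl => sub_eq_zero.1 (hall l hl)
    by_cases hc : c = 0
    · rcases hne with h1 | ⟨l, hl, h1⟩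
      · exact h1 hc
      · exact h1 (by rw [hz l hl, hc, zero_mul])
    · rw [lam_hat (h.degQ a) (h.ordQ a),
        aff_congr (z' := fun l => c * (⇑D)^[l] u) (fun l hl => hz l (hl.trans (hma a)))] at hq
      have h1 := aff_mul (m a) (Q a) c (fun l => (⇑D)^[l] u) 1
      rw [mul_one, hq, ← aeval_eq_aff (h.degQ a) (h.ordQ a)] at h1
      exact mul_ne_zero hc (hu.eval_ne_zero (h.Q_ne_zero a)) h1.symm
  refine ⟨z', ?_, fun b k hk => hz'row b k hk.le ?_⟩
  · -- the remaining row of highest order determines the last coordinate from the others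
    by_contra! hall
    obtain ⟨l, hl, hne'⟩ := hz'ne
    have hlast : l = m 0 + m 1 := by
      by_contra h1
      exact hne' (hall l (by omega))
    have hsum : m a.rev + m a.rev.rev = m 0 + m 1 := by
      fin_cases a
      · exact Nat.add_comm _ _
      · rfl
    have hrev : a.rev ≠ a := by fin_cases a <;> decide
    have h1 := hz'row a.rev (m a.rev.rev) le_rfl (fun h2 => hrev (Prod.mk.inj h2).1)
    rw [lam_fd_top h hD hdC hdX (fun a k => eta_succ a k) (derivAdd D) (derivAdd_smul D) a.rev _ z'
      (fun l hl => hall l (by omega)), hsum, ← hlast] at h1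
    exact smul_ne_zero (lc_eta_ne_zero h hu _) hne' h1
  · rintro h2
    obtain ⟨rfl, rfl⟩ := Prod.mk.inj h2
    exact lt_irrefl _ hk

/-- If the parametrization is proper, no tangent vector at `(η, u)` lies over the zero vector at
`η`, so the minors `det resMatQ a` do not vanish at `η`. -/
theorem theta_resMatQ_ne_zero_of_proper (h : Fractions P Q m) (hu : DiffTrans F D u)
    (hD : ∀ a : F, D (algebraMap F E a) = algebraMap F E (δF a))
    (hdC : ∀ a : F, d (C a) = C (δF a)) (hdX : ∀ (i : Fin 3) (k : ℕ), d (X (i, k)) = X (i, k + 1))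
    (hproper : pointField D u P Q = genDF F D {u}) (a : Fin 2) :
    theta (eta D u P Q) (resMatQ d P Q m a).det ≠ 0 := by
  intro h0
  obtain ⟨z, ⟨l, hl, hne⟩, hrow⟩ := exists_tangent h hu hD hdC hdX h0
  let φ : Polynomial E →ₗ[E] E := Polynomial.lsum fun l => LinearMap.mulRight E (z l)
  have hφ : ∀ l, φ (Polynomial.X ^ l) = z l := by
    intro l
    rw [Polynomial.lsum_apply, ← Polynomial.monomial_one_right_eq_X_pow, Polynomial.sum_monomial_index]
    · simp
    · simp
  have hφρ : ∀ b k, k < m b.rev → φ (linOp d D u P Q b k) = 0 := by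
    intro b k hk
    rw [map_linOp]
    simp only [hφ]
    exact hrow b k hk
  obtain ⟨φ', h1, h2⟩ := exists_functional (opShift D) opShift_smul (linOp d D u P Q)
    (linOp_succ hD hdC hdX) (p := m 0) (q := m 1) (degree_linOp h hu hD hdC hdX 0)
    (fun k hk => by
      rw [Polynomial.mem_degreeLT, degree_linOp h hu hD hdC hdX]
      exact_mod_cast (by omega : m 1 + k < m 0 + m 1))
    φ (hφρ 0) (hφρ 1)
  have hz : φ' (Polynomial.X ^ l) = 0 := by
    refine tangent_eq_zero h hu hD hdC hdX (s := fun l => φ' (Polynomial.X ^ l))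
      (fun b k => ?_) (l := l) ?_
    · rw [← map_linOp]
      exact h2 b k
    · rw [hproper]
      exact self_mem_genDF (F := F) (Set.mem_singleton u) l
  rw [h1 _ (by rw [Polynomial.mem_degreeLT, Polynomial.degree_X_pow]; exact_mod_cast hl), hφ] at hz
  exact hne hz

/-- The criterion for the two fractions indexed by `Fin 2`. -/
theorem proper_iff (h : Fractions P Q m) (hu : DiffTrans F D u)
    (hD : ∀ a : F, D (algebraMap F E a) = algebraMap F E (δF a))
    (hdC : ∀ a : F, d (C a) = C (δF a))
    (hdX : ∀ (i : Fin 3) (k : ℕ), d (X (i, k)) = X (i, k + 1)) :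
    pointField D u P Q = genDF F D {u} ↔ ∀ a, (resMatQ d P Q m a).det ≠ 0 := by
  constructor
  · intro hproper a h0
    refine theta_resMatQ_ne_zero_of_proper h hu hD hdC hdX hproper a ?_
    rw [h0, map_zero]
  · intro hA
    refine le_antisymm (pointField_le hD) (genDF_le hD ?_)
    rintro _ rfl
    exact mem_pointField h hu hD hdC hdX (theta_eta_resMatQ_ne_zero h hu hD hdC hdX (hA 0))

end Necessity

/-- a linear differential rational parametrization is proper iff the
differential resultant `R` is nonzero with `ord_x R = m₂` and `ord_y R = m₁`. -/
theorem proper_iff_deltaRes [CharZero F]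
    (δF : Derivation ℤ F F) (D : Derivation ℤ E E)
    (hD : ∀ a : F, D (algebraMap F E a) = algebraMap F E (δF a))
    (dxyu : Derivation ℤ (MvPolynomial (Fin 3 × ℕ) F) (MvPolynomial (Fin 3 × ℕ) F))
    (hdC : ∀ a : F, dxyu (C a) = C (δF a))
    (hdX : ∀ (i : Fin 3) (k : ℕ), dxyu (X (i, k)) = X (i, k + 1))
    (u : E) (hu : DiffTrans F D u)
    (P₁ Q₁ P₂ Q₂ : MvPolynomial ℕ F)
    (hd₁ : P₁.totalDegree ≤ 1) (hd₂ : Q₁.totalDegree ≤ 1)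
    (hd₃ : P₂.totalDegree ≤ 1) (hd₄ : Q₂.totalDegree ≤ 1)
    (hrel₁ : IsRelPrime P₁ Q₁) (hrel₂ : IsRelPrime P₂ Q₂)
    (m₁ m₂ : ℕ) (hm₁ : max (ordU P₁) (ordU Q₁) = (m₁ : WithBot ℕ))
    (hm₂ : max (ordU P₂) (ordU Q₂) = (m₂ : WithBot ℕ)) :
    genDF F D {evalD F D u P₁ / evalD F D u Q₁, evalD F D u P₂ / evalD F D u Q₂}
        = genDF F D {u}
      ↔ (deltaRes F dxyu P₁ Q₁ P₂ Q₂ m₁ m₂ ≠ 0 ∧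
         ordIdx 0 (deltaRes F dxyu P₁ Q₁ P₂ Q₂ m₁ m₂) = (m₂ : WithBot ℕ) ∧
         ordIdx 1 (deltaRes F dxyu P₁ Q₁ P₂ Q₂ m₁ m₂) = (m₁ : WithBot ℕ)) := by
  have h : Fractions ![P₁, P₂] ![Q₁, Q₂] ![m₁, m₂] :=
    ⟨Fin.forall_fin_two.2 ⟨hd₁, hd₃⟩, Fin.forall_fin_two.2 ⟨hd₂, hd₄⟩,
      Fin.forall_fin_two.2 ⟨hrel₁, hrel₂⟩, Fin.forall_fin_two.2 ⟨hm₁, hm₂⟩⟩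
  have key := (proper_iff h hu hD hdC hdX).trans (resultant_condition_iff hdC hdX).symm
  rw [← deltaRes_eq] at key
  exact key

end DiffCurve
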